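/- For every prime p ≥ 5, Ψ_{n-3}^p(3), the number of isomorphism classes of regular p-groups of type (n-3, 3), equals 6 if n = 7, equals 8 if n = 8, and equals 9 if n ≥ 9. -/

import Mathlib

/-- `℧_1(H) = ⟨h^p : h ∈ H⟩` for a subgroup `H`. -/
def MhoOne (p : ℕ) {P : Type} [Group P] (H : Subgroup P) : Subgroup P :=
  Subgroup.closure {y : P | ∃ x ∈ H, y = x ^ p}

/-- A `p`-group `P` is regular if for all `x y : P` there is
`z ∈ ℧_1(γ_2(⟨x,y⟩))` with `x^p * y^p = (x*y)^p * z`. -/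
def IsRegularPGroup (p : ℕ) (P : Type) [Group P] : Prop :=
  ∀ x y : P,
    ∃ z ∈ MhoOne p ⁅Subgroup.closure {x, y}, Subgroup.closure {x, y}⁆,
      x ^ p * y ^ p = (x * y) ^ p * z

/-- `Ω_i(P) = ⟨x : x^(p^i) = 1⟩`. -/
def OmegaSubgroup (p : ℕ) (P : Type) [Group P] (i : ℕ) : Subgroup P :=
  Subgroup.closure {x : P | x ^ p ^ i = 1}

/-- `ω_i(P)`, defined by `p ^ ω_i(P) = |Ω_i(P)/Ω_{i-1}(P)|`. -/
noncomputable def omegaInv (p : ℕ) (P : Type) [Group P] (i : ℕ) : ℕ :=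
  ((OmegaSubgroup p P (i - 1)).relIndex (OmegaSubgroup p P i)).factorization p

/-- `μ_j(P)` (for `j ≥ 1`): the dual partition of `(ω_1(P), ω_2(P), ...)`;
the type invariants of `P` are `μ_1(P) ≥ μ_2(P) ≥ ...`. -/
noncomputable def muInv (p : ℕ) (P : Type) [Group P] (j : ℕ) : ℕ :=
  Nat.card {i : ℕ // 1 ≤ i ∧ j ≤ omegaInv p P i}

/-- `P` has type invariants given by the list `l`. -/
def HasTypeInvariants (p : ℕ) (P : Type) [Group P] (l : List ℕ) : Prop :=
  ∀ i : ℕ, muInv p P (i + 1) = l.getD i 0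

/-- The multiplication extracted from a group structure. -/
def mulOfGroup (G : Type) (s : Group G) : Mul G := by letI := s; infer_instance

/-- The number of isomorphism classes of groups of order `N` whose group structure
satisfies the predicate `Q`. -/
noncomputable def groupClassCount (N : ℕ) (Q : Group (Fin N) → Prop) : ℕ :=
  Nat.card (Quot fun s t : {s : Group (Fin N) // Q s} =>
    Nonempty (@MulEquiv (Fin N) (Fin N) (mulOfGroup _ s.1) (mulOfGroup _ t.1)))

/-- `Ψ_e^p(λ)`: the number of isomorphism classes of regular `p`-groups of type
`(e, λ_1, ..., λ_k)`; such a group has order `p ^ (e + λ_1 + ... + λ_k)`. -/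
noncomputable def PsiType (p e : ℕ) (l : List ℕ) : ℕ :=
  groupClassCount (p ^ (e + l.sum)) fun s =>
    letI := s
    IsRegularPGroup p (Fin (p ^ (e + l.sum))) ∧
      HasTypeInvariants p (Fin (p ^ (e + l.sum))) (e :: l)


set_option linter.style.haveILetI false
set_option linter.unusedSimpArgs false
set_option linter.unusedVariables false
open scoped commutatorElement

/-! ### General facts on finite p-groups -/

theorem aux_frattini {p : ℕ} (hp : p.Prime) {G : Type} [Group G] {n : ℕ}
    (hG : Nat.card G = p ^ n) (K : Subgroup G) (hK : K ≠ ⊤) :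
    ∃ M : Subgroup G, M ≠ ⊤ ∧ K ≤ M ∧ (∀ g h : G, ⁅g, h⁆ ∈ M) ∧ ∀ g : G, g ^ p ∈ M := by
  haveI : Fact p.Prime := ⟨hp⟩
  haveI : Finite G := Nat.finite_of_card_ne_zero (by rw [hG]; exact pow_ne_zero _ hp.ne_zero)
  obtain ⟨i, hi, hKi⟩ : ∃ i ≤ n, Nat.card K = p ^ i :=
    (Nat.dvd_prime_pow hp).1 (hG ▸ Subgroup.card_subgroup_dvd_card K)
  have hin : i < n := by
    rcases hi.lt_or_eq with h | h
    · exact h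
    · exact absurd (Subgroup.eq_top_of_card_eq K (by rw [hKi, hG, h])) hK
  obtain ⟨M, hM, hKM⟩ := Sylow.exists_subgroup_card_pow_prime_le (G := G) p (n := i) (m := n - 1)
    (by rw [hG]; exact pow_dvd_pow _ (by omega)) K hKi (by omega)
  have hidx : M.index = p := by
    have h1 := M.card_mul_index
    rw [hM, hG] at h1
    have h2 : p ^ n = p ^ (n - 1) * p := by rw [← pow_succ]; congr 1; omega
    rw [h2] at h1
    exact Nat.eq_of_mul_eq_mul_left (pow_pos hp.pos _) h1
  haveI : M.Normal := by
    apply Subgroup.normal_of_index_eq_minFac_card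
    rw [hidx, hG, Nat.Prime.pow_minFac hp (by omega)]
  have hcard : Nat.card (G ⧸ M) = p := by rw [← Subgroup.index_eq_card, hidx]
  haveI : IsCyclic (G ⧸ M) := isCyclic_of_prime_card hcard
  have hcm : ∀ a b : G ⧸ M, a * b = b * a := (IsCyclic.commGroup (α := G ⧸ M)).mul_comm
  refine ⟨M, ?_, hKM, ?_, ?_⟩
  · rintro rfl
    rw [Subgroup.index_top] at hidx
    exact hp.one_lt.ne hidx
  · intro g h
    rw [← QuotientGroup.eq_one_iff]
    have h1 : (QuotientGroup.mk' M) ⁅g, h⁆ = 1 := by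
      rw [map_commutatorElement, commutatorElement_eq_one_iff_mul_comm]
      exact hcm _ _
    exact h1
  · intro g
    have := Subgroup.pow_index_mem M g
    rwa [hidx] at this

theorem aux_comm_le {G : Type} [Group G] (T : Subgroup G) (s : Set G)
    (hT : ∀ g ∈ Subgroup.closure s, ∀ t ∈ T, g * t * g⁻¹ ∈ T)
    (hs : ∀ x ∈ s, ∀ y ∈ s, ⁅x, y⁆ ∈ T) :
    ⁅Subgroup.closure s, Subgroup.closure s⁆ ≤ T := by
  rw [Subgroup.commutator_le]
  have key : ∀ x ∈ Subgroup.closure s, ∀ y ∈ s, ⁅x, y⁆ ∈ T := by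
    intro x hx y hy
    induction hx using Subgroup.closure_induction with
    | mem x hx => exact hs x hx y hy
    | one => simp
    | mul a b ha hb iha ihb =>
      have : ⁅a * b, y⁆ = (a * ⁅b, y⁆ * a⁻¹) * ⁅a, y⁆ := by
        simp only [commutatorElement_def]; group
      rw [this]
      exact T.mul_mem (hT a ha _ ihb) iha
    | inv a ha iha =>
      have : ⁅a⁻¹, y⁆ = a⁻¹ * ⁅a, y⁆⁻¹ * a⁻¹⁻¹ := by
        simp only [commutatorElement_def]; group
      rw [this]
      exact hT _ (inv_mem ha) _ (inv_mem iha)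
  intro x hx y hy
  induction hy using Subgroup.closure_induction with
  | mem y hy => exact key x hx y hy
  | one => simp
  | mul a b ha hb iha ihb =>
    have : ⁅x, a * b⁆ = ⁅x, a⁆ * (a * ⁅x, b⁆ * a⁻¹) := by
      simp only [commutatorElement_def]; group
    rw [this]
    exact T.mul_mem iha (hT a ha _ ihb)
  | inv a ha iha =>
    have : ⁅x, a⁻¹⁆ = a⁻¹ * ⁅x, a⁆⁻¹ * a⁻¹⁻¹ := by
      simp only [commutatorElement_def]; group
    rw [this]
    exact hT _ (inv_mem ha) _ (inv_mem iha)

theorem aux_max {p : ℕ} (hp : p.Prime) {G : Type} [Group G] {n : ℕ}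
    (hG : Nat.card G = p ^ n) (H : Subgroup G) (x : G) (hx : x ∈ H)
    (hH : ¬ H ≤ Subgroup.zpowers x) :
    ∃ M : Subgroup G, M < H ∧ x ∈ M ∧ ⁅H, H⁆ ≤ M := by
  obtain ⟨i, hi, hKi⟩ : ∃ i ≤ n, Nat.card H = p ^ i :=
    (Nat.dvd_prime_pow hp).1 (hG ▸ Subgroup.card_subgroup_dvd_card H)
  obtain ⟨M, hM, hxM, hc, -⟩ := aux_frattini hp hKi (Subgroup.zpowers (⟨x, hx⟩ : H)) (by
    intro h
    apply hH
    intro y hy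
    have : (⟨y, hy⟩ : H) ∈ Subgroup.zpowers (⟨x, hx⟩ : H) := by rw [h]; trivial
    obtain ⟨k, hk⟩ := Subgroup.mem_zpowers_iff.1 this
    refine Subgroup.mem_zpowers_iff.2 ⟨k, ?_⟩
    simpa using congrArg Subtype.val hk)
  refine ⟨M.map H.subtype, ?_, ?_, ?_⟩
  · refine lt_of_le_of_ne ?_ ?_
    · rintro _ ⟨y, -, rfl⟩
      exact y.2
    · intro h
      apply hM
      rw [eq_top_iff]
      intro y _
      have : (y : G) ∈ M.map H.subtype := by rw [h]; exact y.2
      obtain ⟨z, hz, hzy⟩ := this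
      have : z = y := Subtype.ext hzy
      exact this ▸ hz
  · exact ⟨⟨x, hx⟩, hxM (Subgroup.mem_zpowers _), rfl⟩
  · rw [Subgroup.commutator_le]
    intro g hg h hh
    exact ⟨⁅⟨g, hg⟩, ⟨h, hh⟩⁆, hc _ _, rfl⟩

theorem aux_closure_le {G : Type} [Group G] {x y : G} {M : Subgroup G} (hx : x ∈ M) (hy : y ∈ M) :
    Subgroup.closure {x, y} ≤ M := by
  rw [Subgroup.closure_le]
  rintro z (rfl | rfl) <;> assumption

theorem aux_mem_l {G : Type} [Group G] (x y : G) : x ∈ Subgroup.closure {x, y} :=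
  Subgroup.subset_closure (by simp)

theorem aux_mem_r {G : Type} [Group G] (x y : G) : y ∈ Subgroup.closure {x, y} :=
  Subgroup.subset_closure (by simp)

theorem aux_card_lt {G : Type} [Group G] [Finite G] {A B : Subgroup G} (h : A < B) :
    Nat.card A < Nat.card B := by
  exact Set.Finite.card_lt_card (Set.toFinite _) h

theorem aux_commute {G : Type} [Group G] {H : Subgroup G} {z x y : G}
    (h : H ≤ Subgroup.zpowers z) (hx : x ∈ H) (hy : y ∈ H) : Commute x y := by
  obtain ⟨i, rfl⟩ := Subgroup.mem_zpowers_iff.1 (h hx)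
  obtain ⟨j, rfl⟩ := Subgroup.mem_zpowers_iff.1 (h hy)
  exact Commute.zpow_zpow_self _ _ _

/-! ### Regular p-groups -/

theorem reg_mho_bot {p : ℕ} (hp : p.Prime) {P : Type} [Group P] [Finite P]
    (K : Subgroup P) (u w : P) (hK : K = Subgroup.closure {u, w})
    (hlt : ⁅K, K⁆ < K)
    (IH : ∀ g h : P, Nat.card (Subgroup.closure {g, h}) < Nat.card K →
      (g ^ p = h ^ p ↔ (g⁻¹ * h) ^ p = 1))
    (hc : ⁅u, w⁆ ^ p = 1) : MhoOne p ⁅K, K⁆ = ⊥ := by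
  let T : Subgroup P :=
    { carrier := {g | g ∈ ⁅K, K⁆ ∧ g ^ p = 1}
      mul_mem' := by
        rintro g h ⟨hg, hg'⟩ ⟨hh, hh'⟩
        refine ⟨mul_mem hg hh, ?_⟩
        have := (IH g⁻¹ h (lt_of_le_of_lt (Subgroup.card_le_of_le
          (aux_closure_le (inv_mem hg) hh)) (aux_card_lt hlt))).1 (by simp [hg', hh'])
        simpa using this
      one_mem' := ⟨one_mem _, one_pow _⟩
      inv_mem' := by
        rintro g ⟨hg, hg'⟩
        exact ⟨inv_mem hg, by simp [hg']⟩ }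
  have hTle : ⁅K, K⁆ ≤ T := by
    have hu : u ∈ K := hK ▸ aux_mem_l u w
    have hw : w ∈ K := hK ▸ aux_mem_r u w
    have huw : ⁅u, w⁆ ∈ T := ⟨Subgroup.commutator_mem_commutator hu hw, hc⟩
    have := aux_comm_le T {u, w} (by
      rw [← hK]
      rintro g hg t ⟨ht, ht'⟩
      refine ⟨?_, by rw [conj_pow, ht']; simp⟩
      have h1 : g * t * g⁻¹ = ⁅g, t⁆ * t := by simp [commutatorElement_def]
      rw [h1]
      exact mul_mem (Subgroup.commutator_mem_commutator hg (hlt.le ht)) ht) (by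
      rintro x (rfl | rfl) y (rfl | rfl)
      · simp
      · exact huw
      · rw [← commutatorElement_inv]; exact inv_mem huw
      · simp)
    rwa [← hK] at this
  rw [MhoOne, Subgroup.closure_eq_bot_iff]
  rintro y ⟨x, hx, rfl⟩
  exact (hTle hx).2

theorem reg_pow_eq {p : ℕ} (hp : p.Prime) {P : Type} [Group P] {n : ℕ}
    (hP : Nat.card P = p ^ n) (hreg : IsRegularPGroup p P) :
    ∀ (c : ℕ) (x y : P), Nat.card (Subgroup.closure {x, y}) = c →
      (x ^ p = y ^ p ↔ (x⁻¹ * y) ^ p = 1) := by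
  haveI : Finite P := Nat.finite_of_card_ne_zero (by rw [hP]; exact pow_ne_zero _ hp.ne_zero)
  intro c
  induction c using Nat.strong_induction_on with
  | _ c ih =>
  intro x y hc
  have IH : ∀ g h : P, Nat.card (Subgroup.closure {g, h}) < Nat.card (Subgroup.closure {x, y}) →
      (g ^ p = h ^ p ↔ (g⁻¹ * h) ^ p = 1) := fun g h hgh => ih _ (hc ▸ hgh) g h rfl
  set K := Subgroup.closure {x, y} with hKdef
  have hx : x ∈ K := aux_mem_l x y
  have hy : y ∈ K := aux_mem_r x y
  constructor
  · intro hxy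
    by_cases hcyc : K ≤ Subgroup.zpowers x
    · have hcom := aux_commute hcyc (inv_mem hx) hy
      rw [hcom.mul_pow, inv_pow, hxy]; simp
    · obtain ⟨M, hMK, hxM, hcM⟩ := aux_max hp hP K x hx hcyc
      have hx'M : y * x * y⁻¹ ∈ M := by
        have : y * x * y⁻¹ = ⁅y, x⁆ * x := by simp [commutatorElement_def]
        rw [this]
        exact mul_mem (hcM (Subgroup.commutator_mem_commutator hy hx)) hxM
      have h1 := (IH (y * x * y⁻¹)⁻¹ x⁻¹ (lt_of_le_of_lt (Subgroup.card_le_of_le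
          (aux_closure_le (inv_mem hx'M) (inv_mem hxM))) (aux_card_lt hMK))).1 (by
          rw [inv_pow, inv_pow, conj_pow, hxy, ← pow_succ', pow_succ]; simp)
      have h2 : ⁅y, x⁆ ^ p = 1 := by
        rw [commutatorElement_def]; simpa using h1
      have hbot := reg_mho_bot hp K y x (by rw [hKdef, Set.pair_comm]) (lt_of_le_of_lt hcM hMK) IH h2
      obtain ⟨z, hz, hz'⟩ := hreg x⁻¹ y
      have hKK : Subgroup.closure {x⁻¹, y} = K := by
        apply le_antisymm
        · exact aux_closure_le (inv_mem hx) hy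
        · exact aux_closure_le (by simpa using inv_mem (aux_mem_l x⁻¹ y)) (aux_mem_r _ _)
      rw [hKK, hbot, Subgroup.mem_bot] at hz
      rw [hz, mul_one] at hz'
      rw [← hz', inv_pow, hxy]; simp
  · intro hxy
    obtain ⟨w, hw⟩ : ∃ w, w = x⁻¹ * y := ⟨_, rfl⟩
    have hyw : y = x * w := by rw [hw]; simp
    rw [← hw] at hxy
    have hwK : w ∈ K := hw ▸ mul_mem (inv_mem hx) hy
    by_cases hcyc : K ≤ Subgroup.zpowers w
    · have hcom := aux_commute hcyc hx hwK
      rw [hyw, hcom.mul_pow, hxy, mul_one]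
    · obtain ⟨M, hMK, hwM, hcM⟩ := aux_max hp hP K w hwK hcyc
      have hw'M : x * w * x⁻¹ ∈ M := by
        have : x * w * x⁻¹ = ⁅x, w⁆ * w := by simp [commutatorElement_def]
        rw [this]
        exact mul_mem (hcM (Subgroup.commutator_mem_commutator hx hwK)) hwM
      have h1 := (IH (x * w * x⁻¹)⁻¹ w⁻¹ (lt_of_le_of_lt (Subgroup.card_le_of_le
          (aux_closure_le (inv_mem hw'M) (inv_mem hwM))) (aux_card_lt hMK))).1 (by
          rw [inv_pow, inv_pow, conj_pow, hxy]; simp)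
      have h2 : ⁅x, w⁆ ^ p = 1 := by
        rw [commutatorElement_def]; simpa using h1
      have hKK : Subgroup.closure {x, w} = K := by
        apply le_antisymm
        · exact aux_closure_le hx hwK
        · exact aux_closure_le (aux_mem_l _ _) (by
            rw [hyw]; exact mul_mem (aux_mem_l _ _) (aux_mem_r _ _))
      have hbot := reg_mho_bot hp K x w hKK.symm (lt_of_le_of_lt hcM hMK) IH h2
      obtain ⟨z, hz, hz'⟩ := hreg x w
      rw [hKK, hbot, Subgroup.mem_bot] at hz
      rw [hz, mul_one, hxy, mul_one] at hz'
      rw [hyw, hz']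

theorem reg_pow_mul {p : ℕ} (hp : p.Prime) {P : Type} [Group P] {n : ℕ}
    (hP : Nat.card P = p ^ n) (hreg : IsRegularPGroup p P) :
    ∀ (c : ℕ) (x y : P), Nat.card (Subgroup.closure {x, y}) = c →
      ∃ z ∈ Subgroup.closure {x, y}, x ^ p * y ^ p = z ^ p := by
  haveI : Finite P := Nat.finite_of_card_ne_zero (by rw [hP]; exact pow_ne_zero _ hp.ne_zero)
  intro c
  induction c using Nat.strong_induction_on with
  | _ c ih =>
  intro x y hc
  set K := Subgroup.closure {x, y} with hKdef
  have hx : x ∈ K := aux_mem_l x y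
  have hy : y ∈ K := aux_mem_r x y
  by_cases hcyc : K ≤ Subgroup.zpowers (x * y)
  · exact ⟨x * y, mul_mem hx hy, ((aux_commute hcyc hx hy).mul_pow p).symm⟩
  obtain ⟨M, hMK, hxM, hcM⟩ := aux_max hp hP K (x * y) (mul_mem hx hy) hcyc
  have IH : ∀ g ∈ M, ∀ h ∈ M, ∃ z ∈ M, g ^ p * h ^ p = z ^ p := by
    intro g hg h hh
    have hle : Subgroup.closure {g, h} ≤ M := aux_closure_le hg hh
    obtain ⟨z, hz, hz'⟩ := ih _ (hc ▸ lt_of_le_of_lt (Subgroup.card_le_of_le hle)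
      (aux_card_lt hMK)) g h rfl
    exact ⟨z, hle hz, hz'⟩
  obtain ⟨z, hz, hz'⟩ := hreg x y
  have : ∃ t ∈ M, z = t ^ p := by
    rw [MhoOne] at hz
    clear hz'
    induction hz using Subgroup.closure_induction with
    | mem a ha =>
      obtain ⟨b, hb, rfl⟩ := ha
      exact ⟨b, hcM hb, rfl⟩
    | one => exact ⟨1, one_mem _, by simp⟩
    | mul a b _ _ iha ihb =>
      obtain ⟨s, hs, rfl⟩ := iha
      obtain ⟨t, ht, rfl⟩ := ihb
      exact IH s hs t ht
    | inv a _ iha =>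
      obtain ⟨s, hs, rfl⟩ := iha
      exact ⟨s⁻¹, inv_mem hs, by simp⟩
  obtain ⟨t, ht, rfl⟩ := this
  obtain ⟨s, hs, hs'⟩ := IH _ hxM t ht
  exact ⟨s, hMK.le hs, by rw [hz', hs']⟩


/-- generation from generation modulo p-th powers and commutators -/
theorem aux_gen {p : ℕ} (hp : p.Prime) {G : Type} [Group G] {n : ℕ}
    (hG : Nat.card G = p ^ n) (K U : Subgroup G)
    (hU : ∀ M : Subgroup G, (∀ g h : G, ⁅g, h⁆ ∈ M) → (∀ g : G, g ^ p ∈ M) → U ≤ M)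
    (hK : K ⊔ U = ⊤) : K = ⊤ := by
  by_contra h
  obtain ⟨M, hM, hKM, h1, h2⟩ := aux_frattini hp hG K h
  apply hM
  rw [eq_top_iff, ← hK]
  exact sup_le hKM (hU M h1 h2)

theorem aux_card_mul {p : ℕ} (hp : p.Prime) {G : Type} [Group G] {n : ℕ}
    (hG : Nat.card G = p ^ n) (A B : Subgroup G) (h : A < B) :
    p * Nat.card A ≤ Nat.card B := by
  haveI : Finite G := Nat.finite_of_card_ne_zero (by rw [hG]; exact pow_ne_zero _ hp.ne_zero)
  obtain ⟨i, -, hA⟩ : ∃ i ≤ n, Nat.card A = p ^ i :=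
    (Nat.dvd_prime_pow hp).1 (hG ▸ Subgroup.card_subgroup_dvd_card A)
  obtain ⟨j, -, hB⟩ : ∃ i ≤ n, Nat.card B = p ^ i :=
    (Nat.dvd_prime_pow hp).1 (hG ▸ Subgroup.card_subgroup_dvd_card B)
  have := aux_card_lt h
  rw [hA, hB] at *
  have hij : i < j := (Nat.pow_lt_pow_iff_right hp.one_lt).1 this
  rw [← pow_succ']
  exact Nat.pow_le_pow_right hp.pos hij

theorem reg_classC {p : ℕ} (hp : p.Prime) {P : Type} [Group P] {n : ℕ}
    (hP : Nat.card P = p ^ n) (hreg : IsRegularPGroup p P)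
    (hO : Nat.card (OmegaSubgroup p P 1) ≤ p ^ 2) :
    (∀ x y : P, ∃ z, x ^ p * y ^ p = z ^ p) ∧ (∀ x y : P, ∃ z, ⁅x, y⁆ = z ^ p) ∧
      ∃ x y : P, Subgroup.closure {x, y} = ⊤ := by
  haveI : Fact p.Prime := ⟨hp⟩
  haveI : Finite P := Nat.finite_of_card_ne_zero (by rw [hP]; exact pow_ne_zero _ hp.ne_zero)
  have hA : ∀ x y : P, x ^ p = y ^ p ↔ (x⁻¹ * y) ^ p = 1 := fun x y =>
    reg_pow_eq hp hP hreg _ x y rfl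
  have hB : ∀ x y : P, ∃ z, x ^ p * y ^ p = z ^ p := fun x y => by
    obtain ⟨z, -, hz⟩ := reg_pow_mul hp hP hreg _ x y rfl
    exact ⟨z, hz⟩
  let T : Subgroup P :=
    { carrier := {g | g ^ p = 1}
      mul_mem' := by
        intro g h hg hh
        simp only [Set.mem_ofPred_eq] at *
        have := (hA g⁻¹ h).1 (by simp [hg, hh])
        simpa using this
      one_mem' := one_pow _
      inv_mem' := by
        intro g hg
        simp only [Set.mem_ofPred_eq] at *
        simp [hg] }
  let U : Subgroup P :=
    { carrier := {g | ∃ z, g = z ^ p}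
      mul_mem' := by
        rintro _ _ ⟨z, rfl⟩ ⟨w, rfl⟩
        exact hB z w
      one_mem' := ⟨1, by simp⟩
      inv_mem' := by
        rintro _ ⟨z, rfl⟩
        exact ⟨z⁻¹, by simp⟩ }
  have hTO : T ≤ OmegaSubgroup p P 1 := by
    intro g hg
    apply Subgroup.subset_closure
    have hg' : g ^ p = 1 := hg
    simpa using hg'
  have hTc : Nat.card T ≤ p ^ 2 := (Subgroup.card_le_of_le hTO).trans hO
  have hUT : Nat.card (P ⧸ T) = Nat.card U := by
    refine Nat.card_congr (Equiv.ofBijective (Quotient.lift (fun g : P => (⟨g ^ p, g, rfl⟩ : U)) ?_) ⟨?_, ?_⟩)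
    · intro g h hgh
      have h1 : g⁻¹ * h ∈ T := QuotientGroup.leftRel_apply.1 hgh
      exact Subtype.ext ((hA g h).2 h1)
    · intro g h
      induction g using Quotient.inductionOn with | _ g =>
      induction h using Quotient.inductionOn with | _ h =>
      intro hgh
      apply Quotient.sound
      apply QuotientGroup.leftRel_apply.2
      exact (hA g h).1 (congrArg Subtype.val hgh)
    · rintro ⟨_, z, rfl⟩
      exact ⟨(z : P ⧸ T), rfl⟩
  have hPU : Nat.card P ≤ Nat.card U * p ^ 2 := by
    rw [Subgroup.card_eq_card_quotient_mul_card_subgroup T, hUT]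
    exact Nat.mul_le_mul_left _ hTc
  haveI hUn : U.Normal := ⟨by
    rintro _ ⟨z, rfl⟩ g
    exact ⟨g * z * g⁻¹, by rw [conj_pow]⟩⟩
  have hidx : U.index ≤ p ^ 2 := by
    have h1 := U.card_mul_index
    rw [← h1] at hPU
    exact Nat.le_of_mul_le_mul_left hPU Nat.card_pos
  have hcomm : ∀ a b : P ⧸ U, a * b = b * a := by
    obtain ⟨i, hi, hUi⟩ : ∃ i ≤ n, U.index = p ^ i :=
      (Nat.dvd_prime_pow hp).1 (hP ▸ Subgroup.index_dvd_card U)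
    have hi2 : i ≤ 2 := by
      rw [hUi] at hidx
      exact (Nat.pow_le_pow_iff_right hp.one_lt).1 hidx
    rw [Subgroup.index_eq_card] at hUi
    interval_cases i
    · intro a b
      haveI : Subsingleton (P ⧸ U) := (Nat.card_eq_one_iff_unique.1 (by simpa using hUi)).1
      exact Subsingleton.elim _ _
    · haveI : IsCyclic (P ⧸ U) := isCyclic_of_prime_card (p := p) (by simpa using hUi)
      exact (IsCyclic.commGroup (α := P ⧸ U)).mul_comm
    · exact IsPGroup.commutative_of_card_eq_prime_sq hUi
  refine ⟨hB, ?_, ?_⟩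
  · intro x y
    have h1 : (QuotientGroup.mk' U) ⁅x, y⁆ = 1 := by
      rw [map_commutatorElement, commutatorElement_eq_one_iff_mul_comm]
      exact hcomm _ _
    exact (QuotientGroup.eq_one_iff _).1 h1
  · have hgen : ∀ K : Subgroup P, K ⊔ U = ⊤ → K = ⊤ := fun K hK =>
      aux_gen hp hP K U (fun M _ h2 => by rintro _ ⟨z, rfl⟩; exact h2 z) hK
    by_contra hcon
    push Not at hcon
    have hne : ∀ x y : P, Subgroup.closure {x, y} ⊔ U ≠ ⊤ := fun x y h => hcon x y (hgen _ h)
    have h0 : U ≠ ⊤ := fun h => hne 1 1 (by rw [h]; simp)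
    obtain ⟨x, hx⟩ : ∃ x, x ∉ U := by
      by_contra h; push Not at h; exact h0 (eq_top_iff.2 fun y _ => h y)
    have h1 := hne x x
    obtain ⟨y, hy⟩ : ∃ y, y ∉ Subgroup.closure {x, x} ⊔ U := by
      by_contra h; push Not at h; exact h1 (eq_top_iff.2 fun y _ => h y)
    have c1 : U < Subgroup.closure {x, x} ⊔ U := by
      refine lt_of_le_of_ne le_sup_right fun h => hx ?_
      rw [h]
      exact (le_sup_left : _ ≤ Subgroup.closure {x, x} ⊔ U) (aux_mem_l x x)
    have c2 : Subgroup.closure {x, x} ⊔ U < Subgroup.closure {x, y} ⊔ U := by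
      refine lt_of_le_of_ne (sup_le_sup_right (aux_closure_le (aux_mem_l _ _) (aux_mem_l _ _)) _) fun h => hy ?_
      rw [h]
      exact (le_sup_left : _ ≤ Subgroup.closure {x, y} ⊔ U) (aux_mem_r x y)
    have c3 : Subgroup.closure {x, y} ⊔ U < ⊤ := lt_top_iff_ne_top.2 (hne x y)
    have e1 := aux_card_mul hp hP _ _ c1
    have e2 := aux_card_mul hp hP _ _ c2
    have e3 := aux_card_lt c3
    have e4 : Nat.card (⊤ : Subgroup P) = Nat.card P := Subgroup.card_top
    rw [e4] at e3
    nlinarith [hp.pos]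

theorem aux_root {p : ℕ} (hp : p.Prime) {P : Type} [Group P] {n : ℕ}
    (hP : Nat.card P = p ^ n) (d : P) (hd : d ≠ 1) :
    ∃ u : P, d ∈ Subgroup.zpowers u ∧ ∀ s : P, u ≠ s ^ p := by
  haveI : Finite P := Nat.finite_of_card_ne_zero (by rw [hP]; exact pow_ne_zero _ hp.ne_zero)
  obtain ⟨u, hu, hmax⟩ := Set.exists_max_image {u : P | d ∈ Subgroup.zpowers u} orderOf
    (Set.toFinite _) ⟨d, Subgroup.mem_zpowers d⟩
  refine ⟨u, hu, ?_⟩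
  rintro s rfl
  have h1 : d ∈ Subgroup.zpowers s := by
    have : Subgroup.zpowers (s ^ p) ≤ Subgroup.zpowers s := by
      rw [Subgroup.zpowers_le]; exact Subgroup.pow_mem _ (Subgroup.mem_zpowers s) p
    exact this hu
  have h2 := hmax s h1
  obtain ⟨i, hi, hs⟩ : ∃ i ≤ n, orderOf s = p ^ i :=
    (Nat.dvd_prime_pow hp).1 (hP ▸ orderOf_dvd_natCard s)
  rw [orderOf_pow, hs] at h2
  rcases Nat.eq_zero_or_pos i with rfl | hi0
  · rw [pow_zero, orderOf_eq_one_iff] at hs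
    subst hs
    apply hd
    simpa using h1
  · have h3 : (p ^ i).gcd p = p := Nat.gcd_eq_right (dvd_pow_self p (by omega))
    rw [h3] at h2
    exact absurd h2 (not_le.2 (Nat.div_lt_self (pow_pos hp.pos _) hp.one_lt))

theorem aux_center {p : ℕ} (hp : p.Prime) {P : Type} [Group P] {n : ℕ}
    (hP : Nat.card P = p ^ n) (N : Subgroup P) [N.Normal] (hN : N ≠ ⊥) :
    ∃ m ∈ N, m ∈ Subgroup.center P ∧ orderOf m = p := by
  haveI : Fact p.Prime := ⟨hp⟩
  haveI : Finite P := Nat.finite_of_card_ne_zero (by rw [hP]; exact pow_ne_zero _ hp.ne_zero)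
  have hPG : IsPGroup p P := IsPGroup.of_card hP
  obtain ⟨i, hi, hNi⟩ : ∃ i ≤ n, Nat.card N = p ^ i :=
    (Nat.dvd_prime_pow hp).1 (hP ▸ Subgroup.card_subgroup_dvd_card N)
  have hi0 : i ≠ 0 := by
    rintro rfl
    exact hN (Subgroup.card_eq_one.1 (by simpa using hNi))
  obtain ⟨b, hb, hb1⟩ := (IsPGroup.of_equiv hPG (ConjAct.toConjAct (G := P))).exists_fixed_point_of_prime_dvd_card_of_fixed_point
    (α := N) (hNi ▸ dvd_pow_self p hi0) (a := 1) (by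
      intro g; simp)
  have hbc : (b : P) ∈ Subgroup.center P := by
    rw [Subgroup.mem_center_iff]
    intro g
    have h1 := congrArg Subtype.val (hb (ConjAct.toConjAct g))
    rw [ConjAct.Subgroup.val_conj_smul, ConjAct.toConjAct_smul] at h1
    exact mul_inv_eq_iff_eq_mul.1 h1
  have hb1' : (b : P) ≠ 1 := fun h => hb1 (Subtype.ext h.symm)
  obtain ⟨j, hj, hbj⟩ : ∃ i ≤ n, orderOf (b : P) = p ^ i :=
    (Nat.dvd_prime_pow hp).1 (hP ▸ orderOf_dvd_natCard _)
  have hj0 : j ≠ 0 := by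
    rintro rfl
    exact hb1' (orderOf_eq_one_iff.1 (by simpa using hbj))
  refine ⟨(b : P) ^ p ^ (j - 1), N.pow_mem b.2 _, Subgroup.pow_mem _ hbc _, ?_⟩
  rw [orderOf_pow_of_dvd (pow_ne_zero _ hp.ne_zero) (hbj ▸ pow_dvd_pow p (Nat.sub_le j 1)), hbj,
    Nat.pow_div (Nat.sub_le _ _) hp.pos]
  have : j - (j - 1) = 1 := by omega
  rw [this, pow_one]


theorem aux_zpowers_normal {G : Type} [Group G] [Finite G] (z w d : G)
    (hgen : Subgroup.closure {z, w} = ⊤) (hz : z * d * z⁻¹ ∈ Subgroup.zpowers d)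
    (hw : w * d * w⁻¹ ∈ Subgroup.zpowers d) : (Subgroup.zpowers d).Normal := by
  rw [← Subgroup.normalizer_eq_top_iff, eq_top_iff, ← hgen]
  have key : ∀ g : G, g * d * g⁻¹ ∈ Subgroup.zpowers d → ∀ n ∈ Subgroup.zpowers d,
      g * n * g⁻¹ ∈ Subgroup.zpowers d := by
    intro g hg n hn
    obtain ⟨i, rfl⟩ := Subgroup.mem_zpowers_iff.1 hn
    rw [← conj_zpow]
    exact Subgroup.zpow_mem _ hg i
  refine aux_closure_le ?_ ?_
  · exact Subgroup.mem_normalizer_fintype (key z hz)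
  · exact Subgroup.mem_normalizer_fintype (key w hw)

theorem aux_base {p : ℕ} (hp : p.Prime) {P : Type} [Group P] {n : ℕ}
    (hP : Nat.card P = p ^ n) (hpow : ∀ x y : P, ∃ z, x ^ p * y ^ p = z ^ p)
    (hcom : ∀ x y : P, ∃ z, ⁅x, y⁆ = z ^ p) (d : P) (hd : d ≠ 1)
    (hcd : ∀ x y : P, ⁅x, y⁆ ∈ Subgroup.zpowers d)
    (hgen : ∃ x y : P, Subgroup.closure {x, y} = ⊤) :
    ∃ a b : P, Subgroup.closure {a, b} = ⊤ ∧ b * a * b⁻¹ ∈ Subgroup.zpowers a := by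
  haveI : Finite P := Nat.finite_of_card_ne_zero (by rw [hP]; exact pow_ne_zero _ hp.ne_zero)
  obtain ⟨u, hu, hu'⟩ := aux_root hp hP d hd
  obtain ⟨x, y, hxy⟩ := hgen
  have hdu : Subgroup.zpowers d ≤ Subgroup.zpowers u := by rwa [Subgroup.zpowers_le]
  have hconj : ∀ b : P, b * u * b⁻¹ ∈ Subgroup.zpowers u := by
    intro b
    have : b * u * b⁻¹ = ⁅b, u⁆ * u := by simp [commutatorElement_def]
    rw [this]
    exact mul_mem (hdu (hcd b u)) (Subgroup.mem_zpowers u)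
  let U : Subgroup P :=
    { carrier := {g | ∃ z, g = z ^ p}
      mul_mem' := by
        rintro _ _ ⟨z, rfl⟩ ⟨w, rfl⟩
        exact hpow z w
      one_mem' := ⟨1, by simp⟩
      inv_mem' := by
        rintro _ ⟨z, rfl⟩
        exact ⟨z⁻¹, by simp⟩ }
  haveI hUn : U.Normal := ⟨by
    rintro _ ⟨z, rfl⟩ g
    exact ⟨g * z * g⁻¹, by rw [conj_pow]⟩⟩
  have hcm : ∀ a b : P ⧸ U, a * b = b * a := by
    intro a b
    induction a using QuotientGroup.induction_on with | _ a =>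
    induction b using QuotientGroup.induction_on with | _ b =>
    have h1 : (QuotientGroup.mk' U) ⁅a, b⁆ = 1 := (QuotientGroup.eq_one_iff _).2 (hcom a b)
    rw [map_commutatorElement, commutatorElement_eq_one_iff_mul_comm] at h1
    exact h1
  -- write u = x^i y^j q
  obtain ⟨i, j, q, hq, huq⟩ : ∃ i j : ℤ, ∃ q ∈ U, u = x ^ i * y ^ j * q := by
    letI : CommGroup (P ⧸ U) := { (inferInstance : Group (P ⧸ U)) with mul_comm := hcm }
    have h1 : (u : P ⧸ U) ∈ Subgroup.closure {(x : P ⧸ U), (y : P ⧸ U)} := by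
      have h2 : (Subgroup.closure {x, y}).map (QuotientGroup.mk' U) = Subgroup.closure {(x : P ⧸ U), (y : P ⧸ U)} := by
        rw [MonoidHom.map_closure, Set.image_pair]; rfl
      rw [← h2, hxy]
      exact ⟨u, trivial, rfl⟩
    obtain ⟨i, j, hij⟩ := Subgroup.mem_closure_pair.1 h1
    refine ⟨i, j, (x ^ i * y ^ j)⁻¹ * u, ?_, (mul_inv_cancel_left _ _).symm⟩
    rw [← QuotientGroup.eq]
    exact hij
  have hcase : ∀ M : Subgroup P, M ≠ ⊤ → (∀ g : P, g ^ p ∈ M) → u ∈ M → ∀ s t : P, ∀ k : ℤ,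
      s ^ k ∈ M → t ∈ M → Subgroup.closure {s, t} = ⊤ → (p : ℤ) ∣ k := by
    intro M hM hMp hMu s t k hs ht hst
    by_contra hk
    apply hM
    rw [eq_top_iff, ← hst]
    refine aux_closure_le ?_ ht
    have hcop : IsCoprime (p : ℤ) k := (Int.prime_iff_natAbs_prime.2 (by simpa using hp)).coprime_iff_not_dvd.2 hk
    obtain ⟨α, β, hab⟩ := hcop
    have : s = (s ^ p) ^ α * (s ^ k) ^ β := by
      rw [← zpow_natCast, ← zpow_mul, ← zpow_mul, ← zpow_add, mul_comm _ α, mul_comm _ β, hab, zpow_one]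
    rw [this]
    exact mul_mem (Subgroup.zpow_mem _ (hMp s) _) (Subgroup.zpow_mem _ hs _)
  by_cases h1 : Subgroup.closure {u, y} = ⊤
  · exact ⟨u, y, h1, hconj y⟩
  by_cases h2 : Subgroup.closure {u, x} = ⊤
  · exact ⟨u, x, h2, hconj x⟩
  exfalso
  obtain ⟨M1, hM1, hle1, -, hp1⟩ := aux_frattini hp hP _ h1
  obtain ⟨M2, hM2, hle2, -, hp2⟩ := aux_frattini hp hP _ h2
  obtain ⟨q0, rfl⟩ := hq
  have hi : (p : ℤ) ∣ i := by
    refine hcase M1 hM1 hp1 (hle1 (aux_mem_l _ _)) x y i ?_ (hle1 (aux_mem_r _ _)) hxy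
    have : x ^ i = u * (q0 ^ p)⁻¹ * (y ^ j)⁻¹ := by rw [huq]; group
    rw [this]
    exact mul_mem (mul_mem (hle1 (aux_mem_l _ _)) (inv_mem (hp1 _)))
      (inv_mem (Subgroup.zpow_mem _ (hle1 (aux_mem_r _ _)) _))
  have hj : (p : ℤ) ∣ j := by
    refine hcase M2 hM2 hp2 (hle2 (aux_mem_l _ _)) y x j ?_ (hle2 (aux_mem_r _ _)) (by rw [Set.pair_comm, hxy])
    have : y ^ j = (x ^ i)⁻¹ * u * (q0 ^ p)⁻¹ := by rw [huq]; group
    rw [this]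
    exact mul_mem (mul_mem (inv_mem (Subgroup.zpow_mem _ (hle2 (aux_mem_r _ _)) _)) (hle2 (aux_mem_l _ _))) (inv_mem (hp2 _))
  obtain ⟨i', rfl⟩ := hi
  obtain ⟨j', rfl⟩ := hj
  have : u ∈ U := by
    rw [huq]
    refine mul_mem (mul_mem ⟨x ^ i', ?_⟩ ⟨y ^ j', ?_⟩) ⟨q0, rfl⟩
    · rw [← zpow_natCast, ← zpow_mul, mul_comm]
    · rw [← zpow_natCast, ← zpow_mul, mul_comm]
  obtain ⟨s, hs⟩ := this
  exact hu' s hs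

theorem classC_metacyclic {p : ℕ} (hp : p.Prime) : ∀ (n : ℕ) (P : Type) [Group P],
    Nat.card P = p ^ n → (∀ x y : P, ∃ z, x ^ p * y ^ p = z ^ p) →
    (∀ x y : P, ∃ z, ⁅x, y⁆ = z ^ p) → (∃ x y : P, Subgroup.closure {x, y} = ⊤) →
    ∃ a b : P, Subgroup.closure {a, b} = ⊤ ∧ b * a * b⁻¹ ∈ Subgroup.zpowers a := by
  intro n
  induction n with
  | zero =>
    intro P _ hP _ _ ⟨x, y, hxy⟩
    have : Subsingleton P := (Nat.card_eq_one_iff_unique.1 (by simpa using hP)).1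
    exact ⟨x, y, hxy, by rw [Subsingleton.elim (y * x * y⁻¹) 1]; exact one_mem _⟩
  | succ n ih =>
    intro P _ hP hpow hcom hgen
    haveI : Finite P := Nat.finite_of_card_ne_zero (by rw [hP]; exact pow_ne_zero _ hp.ne_zero)
    by_cases hbot : commutator P = ⊥
    · obtain ⟨x, y, hxy⟩ := hgen
      refine ⟨x, y, hxy, ?_⟩
      have h1 : ⁅y, x⁆ = 1 := by
        have : ⁅y, x⁆ ∈ commutator P := Subgroup.commutator_mem_commutator trivial trivial
        rwa [hbot, Subgroup.mem_bot] at this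
      have h2 : y * x * y⁻¹ = ⁅y, x⁆ * x := by simp [commutatorElement_def]
      rw [h2, h1, one_mul]
      exact Subgroup.mem_zpowers x
    obtain ⟨m0, hm0c, hm0z, hm0o⟩ := aux_center hp hP (commutator P) hbot
    have hm0n : (Subgroup.zpowers m0).Normal := ⟨by
      intro x hx g
      obtain ⟨i, rfl⟩ := Subgroup.mem_zpowers_iff.1 hx
      have h1 := Subgroup.mem_center_iff.1 (Subgroup.zpow_mem _ hm0z i) g
      rw [h1, mul_inv_cancel_right]
      exact hx⟩
    have hQ : Nat.card (P ⧸ Subgroup.zpowers m0) = p ^ n := by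
      have h1 := Subgroup.card_eq_card_quotient_mul_card_subgroup (Subgroup.zpowers m0)
      rw [hP, Nat.card_zpowers, hm0o, pow_succ] at h1
      exact (Nat.eq_of_mul_eq_mul_right hp.pos h1).symm
    obtain ⟨a, b, hab, hba⟩ := ih (P ⧸ Subgroup.zpowers m0) hQ (by
        intro x y
        induction x using QuotientGroup.induction_on with | _ x =>
        induction y using QuotientGroup.induction_on with | _ y =>
        obtain ⟨z, hz⟩ := hpow x y
        exact ⟨(z : P ⧸ Subgroup.zpowers m0), congrArg (QuotientGroup.mk' (Subgroup.zpowers m0)) hz⟩) (by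
        intro x y
        induction x using QuotientGroup.induction_on with | _ x =>
        induction y using QuotientGroup.induction_on with | _ y =>
        obtain ⟨z, hz⟩ := hcom x y
        exact ⟨(z : P ⧸ Subgroup.zpowers m0), congrArg (QuotientGroup.mk' (Subgroup.zpowers m0)) hz⟩) (by
        obtain ⟨x, y, hxy⟩ := hgen
        refine ⟨x, y, ?_⟩
        have h2 : (Subgroup.closure {x, y}).map (QuotientGroup.mk' (Subgroup.zpowers m0)) =
            Subgroup.closure {(x : P ⧸ Subgroup.zpowers m0), (y : P ⧸ Subgroup.zpowers m0)} := by
          rw [MonoidHom.map_closure, Set.image_pair]; rfl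
        rw [← h2, hxy, ← MonoidHom.range_eq_map]
        exact MonoidHom.range_eq_top.2 (QuotientGroup.mk'_surjective _))
    induction a using QuotientGroup.induction_on with | _ z =>
    induction b using QuotientGroup.induction_on with | _ w =>
    have hzw : Subgroup.closure {z, w} = ⊤ := by
      apply aux_gen hp hP _ (Subgroup.zpowers m0)
      · intro M hM _
        rw [Subgroup.zpowers_le]
        have : commutator P ≤ M := by
          rw [commutator_def, Subgroup.commutator_le]
          intro g _ h _
          exact hM g h
        exact this hm0c
      · rw [eq_top_iff]
        intro g _
        have h1 : (g : P ⧸ Subgroup.zpowers m0) ∈ (Subgroup.closure {z, w}).map (QuotientGroup.mk' (Subgroup.zpowers m0)) := by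
          rw [MonoidHom.map_closure, Set.image_pair]
          change (g : P ⧸ Subgroup.zpowers m0) ∈ Subgroup.closure {(z : P ⧸ Subgroup.zpowers m0), (w : P ⧸ Subgroup.zpowers m0)}
          rw [hab]; trivial
        obtain ⟨g', hg', hgg⟩ := h1
        have h3 : g'⁻¹ * g ∈ Subgroup.zpowers m0 := QuotientGroup.eq.1 hgg
        have : g = g' * (g'⁻¹ * g) := by group
        rw [this]
        exact Subgroup.mul_mem_sup hg' h3
    obtain ⟨k, hk⟩ := Subgroup.mem_zpowers_iff.1 hba
    obtain ⟨m, hm, hwz⟩ : ∃ m ∈ Subgroup.zpowers m0, w * z * w⁻¹ = z ^ k * m := by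
      refine ⟨(z ^ k)⁻¹ * (w * z * w⁻¹), ?_, by group⟩
      rw [← QuotientGroup.eq]
      exact hk
    have hmc : ∀ g : P, g * m = m * g := by
      have : m ∈ Subgroup.center P := (Subgroup.zpowers_le.2 hm0z) hm
      exact Subgroup.mem_center_iff.1 this
    have hmp : m ^ p = 1 := by
      obtain ⟨i, rfl⟩ := Subgroup.mem_zpowers_iff.1 hm
      rw [← zpow_natCast, ← zpow_mul, mul_comm, zpow_mul, zpow_natCast, ← hm0o, pow_orderOf_eq_one, one_zpow]
    have hzm : Commute z m := hmc z
    obtain ⟨d, hd⟩ : ∃ d, d = z ^ (k - 1) * m := ⟨_, rfl⟩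
    have hd1 : ⁅w, z⁆ = d := by
      rw [commutatorElement_def, hwz, hd, zpow_sub, zpow_one, mul_assoc, mul_assoc, ← hmc z⁻¹]
    have hzd : z * d * z⁻¹ = d := by
      have : Commute z d := by
        rw [hd]; exact ((Commute.refl z).zpow_right _).mul_right hzm
      rw [this.eq]; simp
    have hwd : w * d * w⁻¹ = d ^ k := by
      have h1 : w * d * w⁻¹ = (w * z * w⁻¹) ^ (k - 1) * m := by
        rw [conj_zpow, hd]
        simp only [mul_assoc]
        rw [← hmc w⁻¹]
      rw [h1, hwz, hd, (hzm.zpow_left _).mul_zpow, (hzm.zpow_left _).mul_zpow, mul_assoc,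
        ← zpow_add_one, sub_add_cancel, ← zpow_mul, ← zpow_mul, mul_comm k]
    haveI hdn : (Subgroup.zpowers d).Normal := aux_zpowers_normal z w d hzw
      (by rw [hzd]; exact Subgroup.mem_zpowers d)
      (by rw [hwd]; exact Subgroup.zpow_mem _ (Subgroup.mem_zpowers d) k)
    have hcd : commutator P ≤ Subgroup.zpowers d := by
      have := aux_comm_le (Subgroup.zpowers d) {z, w} (fun g _ t ht => hdn.conj_mem t ht g) (by
        have h1 : ⁅w, z⁆ ∈ Subgroup.zpowers d := by rw [hd1]; exact Subgroup.mem_zpowers d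
        rintro x (rfl | rfl) y (rfl | rfl)
        · simp
        · rw [← commutatorElement_inv]; exact inv_mem h1
        · exact h1
        · simp)
      rwa [hzw] at this
    have hdne : d ≠ 1 := by
      rintro rfl
      apply hbot
      rw [eq_bot_iff]
      simpa using hcd
    by_cases hdp : d ^ p = 1
    · exact aux_base hp hP hpow hcom d hdne (fun x y => hcd (Subgroup.commutator_mem_commutator trivial trivial)) hgen
    · refine ⟨z, w, hzw, ?_⟩
      have hdpz : d ^ p ∈ Subgroup.zpowers z := by
        rw [hd, (hzm.zpow_left _).mul_pow, hmp, mul_one]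
        exact Subgroup.pow_mem _ (Subgroup.zpow_mem _ (Subgroup.mem_zpowers z) _) _
      have hm0d : m0 ∈ Subgroup.zpowers (d ^ p) := by
        obtain ⟨i, hi⟩ := Subgroup.mem_zpowers_iff.1 (hcd hm0c)
        by_cases hpi : (p : ℤ) ∣ i
        · obtain ⟨j, rfl⟩ := hpi
          rw [← hi, zpow_mul, zpow_natCast]
          exact Subgroup.zpow_mem _ (Subgroup.mem_zpowers _) _
        · exfalso
          apply hdp
          have hcop : IsCoprime (p : ℤ) i := (Int.prime_iff_natAbs_prime.2 (by simpa using hp)).coprime_iff_not_dvd.2 hpi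
          have h1 : (d ^ p) ^ i = 1 := by
            rw [← zpow_natCast, ← zpow_mul, mul_comm, zpow_mul, hi, zpow_natCast, ← hm0o, pow_orderOf_eq_one]
          have hcop2 : IsCoprime ((p : ℤ) ^ (n + 1)) i := hcop.pow_left
          obtain ⟨α, β, hαβ⟩ := hcop2
          have h2 : (d ^ p) ^ ((p : ℤ) ^ (n + 1)) = 1 := by
            rw [← Nat.cast_pow, zpow_natCast, ← hP, pow_card_eq_one']
          rw [← zpow_one (d ^ p), ← hαβ, zpow_add, mul_comm α, mul_comm β, zpow_mul, zpow_mul, h1, h2]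
          simp
      rw [hwz]
      refine mul_mem (Subgroup.zpow_mem _ (Subgroup.mem_zpowers z) _) ?_
      have h1 : Subgroup.zpowers m0 ≤ Subgroup.zpowers z := by
        rw [Subgroup.zpowers_le]
        exact (Subgroup.zpowers_le.2 hdpz) hm0d
      exact h1 hm


theorem nt_geom_mul (V : ℤ) (q p : ℕ) : ∑ t ∈ Finset.range (q * p), V ^ t =
    (∑ t ∈ Finset.range q, V ^ t) * ∑ s ∈ Finset.range p, (V ^ q) ^ s := by
  induction p with
  | zero => simp
  | succ p ih =>
    rw [Nat.mul_succ, Finset.sum_range_add, ih, Finset.sum_range_succ, mul_add, Finset.sum_mul]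
    congr 1
    rw [Finset.sum_mul]
    refine Finset.sum_congr rfl fun x _ => ?_
    rw [pow_add, pow_mul, mul_comm]

theorem nt_pow_lin (W : ℤ) (s : ℕ) : (W - 1) ^ 2 ∣ W ^ s - 1 - s * (W - 1) := by
  induction s with
  | zero => simp
  | succ s ih =>
    obtain ⟨c, hc⟩ := ih
    refine ⟨W * c + s, ?_⟩
    have : W ^ s = 1 + s * (W - 1) + (W - 1) ^ 2 * c := by linarith
    rw [pow_succ, this]
    push_cast
    ring

theorem nt_sum_lin (W : ℤ) (q : ℕ) :
    (W - 1) ^ 2 ∣ ∑ s ∈ Finset.range q, W ^ s - q - (∑ s ∈ Finset.range q, (s : ℤ)) * (W - 1) := by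
  have h : ∑ s ∈ Finset.range q, W ^ s - q - (∑ s ∈ Finset.range q, (s : ℤ)) * (W - 1) =
      ∑ s ∈ Finset.range q, (W ^ s - 1 - s * (W - 1)) := by
    rw [Finset.sum_sub_distrib, Finset.sum_sub_distrib, Finset.sum_mul]
    simp
  rw [h]
  exact Finset.dvd_sum fun s _ => nt_pow_lin W s

theorem nt_dvd_sum {p : ℕ} (hp : p.Prime) (h3 : 3 ≤ p) : (p : ℤ) ∣ ∑ s ∈ Finset.range p, (s : ℤ) := by
  have h1 := Finset.sum_range_id_mul_two p
  have h2 : p ∣ (∑ s ∈ Finset.range p, s) * 2 := ⟨p - 1, h1⟩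
  have h4 : p ∣ ∑ s ∈ Finset.range p, s := by
    refine Nat.Coprime.dvd_of_dvd_mul_right ?_ h2
    rw [Nat.coprime_primes hp Nat.prime_two]
    omega
  have := Int.natCast_dvd_natCast.2 h4
  push_cast at this
  exact this

theorem nt_geom {p : ℕ} (hp : p.Prime) (h3 : 3 ≤ p) {r : ℕ} (hr : 1 ≤ r) (V : ℤ)
    (hV : (p : ℤ) ^ r ∣ V - 1) (i : ℕ) :
    ∃ ε : ℤ, ∑ t ∈ Finset.range (p ^ i), V ^ t = p ^ i * ε ∧ (p : ℤ) ^ r ∣ ε - 1 := by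
  induction i with
  | zero => exact ⟨1, by simp⟩
  | succ i ih =>
    obtain ⟨ε, h1, h2⟩ := ih
    have hW : (p : ℤ) ^ r ∣ V ^ (p ^ i) - 1 := hV.trans (sub_one_dvd_pow_sub_one V _)
    have h4 : ∑ t ∈ Finset.range (p ^ (i + 1)), V ^ t =
        (∑ t ∈ Finset.range (p ^ i), V ^ t) * ∑ s ∈ Finset.range p, (V ^ (p ^ i)) ^ s := by
      rw [pow_succ, nt_geom_mul]
    obtain ⟨c, hc⟩ := hW
    obtain ⟨d, hd⟩ := nt_sum_lin (V ^ (p ^ i)) p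
    obtain ⟨f, hf⟩ := nt_dvd_sum hp h3
    rw [hf, hc] at hd
    obtain ⟨r', rfl⟩ : ∃ r', r = r' + 1 := ⟨r - 1, by omega⟩
    have h5 : ∑ s ∈ Finset.range p, (V ^ (p ^ i)) ^ s = p * (1 + p ^ (r' + 1) * (f * c + p ^ r' * c ^ 2 * d)) := by
      have : ∑ s ∈ Finset.range p, (V ^ (p ^ i)) ^ s = p + (p * f) * (p ^ (r' + 1) * c) + (p ^ (r' + 1) * c) ^ 2 * d := by linarith
      rw [this]; ring
    refine ⟨ε * (1 + p ^ (r' + 1) * (f * c + p ^ r' * c ^ 2 * d)), ?_, ?_⟩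
    · rw [h4, h1, h5]; ring
    · have : ε * (1 + p ^ (r' + 1) * (f * c + p ^ r' * c ^ 2 * d)) - 1 = (ε - 1) + p ^ (r' + 1) * (ε * (f * c + p ^ r' * c ^ 2 * d)) := by ring
      rw [this]
      exact dvd_add h2 ⟨_, rfl⟩

theorem nt_coprime {p : ℕ} (hp : p.Prime) {r : ℕ} (hr : 1 ≤ r) {ε : ℤ} (h : (p : ℤ) ^ r ∣ ε - 1) (s : ℕ) :
    IsCoprime ((p : ℤ) ^ s) ε := by
  apply IsCoprime.pow_left
  obtain ⟨c, hc⟩ := (dvd_pow_self (p : ℤ) (by omega : r ≠ 0)).trans h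
  exact ⟨-c, 1, by linarith⟩


theorem nt_cyc {G : Type} [CommGroup G] [IsCyclic G] [Finite G] (x y : G) (h : orderOf x = orderOf y) :
    ∃ j : ℕ, x ^ j = y ∧ (orderOf x).Coprime j := by
  have key : ∀ z : G, orderOf z = orderOf x → Subgroup.zpowers z = (powMonoidHom (α := G) (orderOf x)).ker := by
    intro z hz
    apply Subgroup.eq_of_le_of_card_ge
    · rw [Subgroup.zpowers_le, MonoidHom.mem_ker, powMonoidHom_apply, ← hz, pow_orderOf_eq_one]
    · rw [IsCyclic.card_powMonoidHom_ker, Nat.card_zpowers, hz]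
      exact Nat.gcd_le_right _ (orderOf_pos x)
  have h1 : y ∈ Subgroup.zpowers x := by
    rw [key x rfl, ← key y h.symm]; exact Subgroup.mem_zpowers y
  obtain ⟨j, hj⟩ := mem_powers_iff_mem_zpowers.2 h1
  refine ⟨j, hj, ?_⟩
  have h2 := orderOf_pow (x := x) (n := j)
  have h3 : x ^ j = y := hj
  rw [h3, ← h] at h2
  have h4 := Nat.div_mul_cancel (Nat.gcd_dvd_left (orderOf x) j)
  rw [← h2] at h4
  exact Nat.eq_of_mul_eq_mul_left (orderOf_pos x) (by rw [h4, mul_one])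

theorem nt_N {p : ℕ} (hp : p.Prime) (h3 : 3 ≤ p) {m : ℕ} (v : ℤ) (h1 : (p : ℤ) ∣ v - 1)
    (hm : ¬ (p : ℤ) ^ m ∣ v - 1) : ∃ r j : ℕ, 1 ≤ r ∧ r < m ∧ p.Coprime j ∧ (p : ℤ) ^ m ∣ v ^ j - (1 + p ^ r) := by
  have hv : v - 1 ≠ 0 := by
    intro h; apply hm; rw [h]; exact dvd_zero _
  have hpI : Prime (p : ℤ) := Nat.prime_iff_prime_int.1 hp
  have hfin : FiniteMultiplicity (p : ℤ) (v - 1) := by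
    rw [Int.finiteMultiplicity_iff]; exact ⟨by simpa using hp.ne_one, hv⟩
  obtain ⟨c, hc, hpc⟩ := hfin.exists_eq_pow_mul_and_not_dvd
  obtain ⟨r, hr⟩ : ∃ r, r = multiplicity (p : ℤ) (v - 1) := ⟨_, rfl⟩
  rw [← hr] at hc
  have hr1 : 1 ≤ r := by
    by_contra h0
    have : r = 0 := by omega
    rw [this, pow_zero, one_mul] at hc
    exact hpc (hc ▸ h1)
  have hrm : r < m := by
    by_contra h0
    apply hm
    rw [hc]
    exact (pow_dvd_pow _ (by omega)).trans (dvd_mul_right _ _)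
  obtain ⟨n, rfl⟩ : ∃ n, m = n + r := ⟨m - r, by omega⟩
  have hle : r + 2 ≤ p * r := by nlinarith
  have o1 := ZMod.orderOf_one_add_mul_prime_pow hp r (by omega) hle c hpc n
  have o2 := ZMod.orderOf_one_add_mul_prime_pow hp r (by omega) hle 1 (by
    intro h; exact hpI.not_isUnit (isUnit_of_dvd_one h)) n
  haveI : NeZero (p ^ (n + r)) := ⟨pow_ne_zero _ hp.ne_zero⟩
  haveI := ZMod.isCyclic_units_of_prime_pow p hp (by omega) (n + r)
  have hu : ∀ x : ZMod (p ^ (n + r)), orderOf x = p ^ n → IsUnit x := by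
    intro x hx
    refine IsUnit.of_pow_eq_one (n := p ^ n) (by rw [← hx, pow_orderOf_eq_one]) (pow_ne_zero _ hp.ne_zero)
  obtain ⟨x, hx⟩ := hu _ o1
  obtain ⟨y, hy⟩ := hu _ o2
  rw [← hx, orderOf_units] at o1
  rw [← hy, orderOf_units] at o2
  obtain ⟨j, hj, hcop⟩ := nt_cyc x y (by rw [o1, o2])
  refine ⟨r, j, hr1, hrm, ?_, ?_⟩
  · rw [o1] at hcop
    exact (Nat.coprime_pow_left_iff (by omega) _ _).1 hcop
  · have h5 : ((v ^ j : ℤ) : ZMod (p ^ (n + r))) = ((1 + p ^ r : ℤ) : ZMod (p ^ (n + r))) := by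
      have : v = 1 + p ^ r * c := by linarith
      rw [this]
      push_cast
      rw [← hx, ← Units.val_pow_eq_pow_val, hj, hy]
      push_cast
      ring
    rw [ZMod.intCast_eq_intCast_iff_dvd_sub] at h5
    push_cast at h5
    rw [← Int.dvd_neg, neg_sub]
    exact h5


/-- Generators and relations of a metacyclic group in normal form. -/
structure MCG (p m k l r : ℕ) (G : Type) [Group G] (a b : G) : Prop where
  hp : p.Prime
  h3 : 3 ≤ p
  card : Nat.card G = p ^ (m + k)
  gen : Subgroup.closure {a, b} = ⊤
  ha : a ^ p ^ m = 1
  hb : b ^ p ^ k = a ^ p ^ l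
  hc : b * a * b⁻¹ = a ^ (1 + p ^ r)
  hr : 1 ≤ r
  hlk : l ≤ k
  hlm : l ≤ m
  hmr : m ≤ l + r

namespace MCG

variable {p m k l r : ℕ} {G : Type} [Group G] {a b : G}

theorem fin (h : MCG p m k l r G a b) : Finite G :=
  Nat.finite_of_card_ne_zero (by rw [h.card]; exact pow_ne_zero _ h.hp.ne_zero)

theorem conj_mem (h : MCG p m k l r G a b) : b * a * b⁻¹ ∈ Subgroup.zpowers a := by
  rw [h.hc]; exact Subgroup.pow_mem _ (Subgroup.mem_zpowers a) _

theorem normal (h : MCG p m k l r G a b) : (Subgroup.zpowers a).Normal := by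
  haveI := h.fin
  exact aux_zpowers_normal a b a h.gen (by simp) h.conj_mem

theorem exists_rep (h : MCG p m k l r G a b) (g : G) : ∃ (X : ℤ) (Y : ℕ), g = a ^ X * b ^ Y := by
  haveI := h.fin
  haveI := h.normal
  have h1 : Subgroup.closure {a, b} = Subgroup.zpowers a ⊔ Subgroup.zpowers b := by
    rw [Set.insert_eq, Subgroup.closure_union, ← Subgroup.zpowers_eq_closure, ← Subgroup.zpowers_eq_closure]
  have h2 : g ∈ Subgroup.zpowers a ⊔ Subgroup.zpowers b := by rw [← h1, h.gen]; trivial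
  obtain ⟨x, hx, y, hy, rfl⟩ := Subgroup.mem_sup_of_normal_left.1 h2
  obtain ⟨X, rfl⟩ := Subgroup.mem_zpowers_iff.1 hx
  obtain ⟨Y, hY⟩ := mem_powers_iff_mem_zpowers.2 hy
  exact ⟨X, Y, by rw [← hY]⟩

theorem conj_pow (h : MCG p m k l r G a b) (X : ℤ) (Y : ℕ) :
    b ^ Y * a ^ X = a ^ ((1 + (p : ℤ) ^ r) ^ Y * X) * b ^ Y := by
  induction Y generalizing X with
  | zero => simp
  | succ Y ih =>
    have h1 : b * a ^ X = a ^ ((1 + (p : ℤ) ^ r) * X) * b := by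
      have : b * a ^ X * b⁻¹ = a ^ ((1 + (p : ℤ) ^ r) * X) := by
        rw [← conj_zpow, h.hc, ← zpow_natCast, ← zpow_mul]
        push_cast
        rfl
      rw [← this]; group
    rw [pow_succ, mul_assoc, h1, ← mul_assoc, ih, mul_assoc, pow_succ, mul_assoc ((1 + (p : ℤ) ^ r) ^ Y)]

theorem mul_rep (h : MCG p m k l r G a b) (X X' : ℤ) (Y Y' : ℕ) :
    (a ^ X * b ^ Y) * (a ^ X' * b ^ Y') = a ^ (X + (1 + (p : ℤ) ^ r) ^ Y * X') * b ^ (Y + Y') := by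
  rw [mul_assoc, ← mul_assoc (b ^ Y), h.conj_pow, zpow_add, pow_add]
  simp only [mul_assoc]

theorem pow_rep (h : MCG p m k l r G a b) (X : ℤ) (Y q : ℕ) :
    (a ^ X * b ^ Y) ^ q = a ^ (X * ∑ i ∈ Finset.range q, ((1 + (p : ℤ) ^ r) ^ Y) ^ i) * b ^ (Y * q) := by
  induction q with
  | zero => simp
  | succ q ih =>
    rw [pow_succ, ih, h.mul_rep, Finset.sum_range_succ, mul_add, Nat.mul_succ]
    congr 3
    rw [← pow_mul, mul_comm X (_ ^ _)]

theorem bpow (h : MCG p m k l r G a b) : b ^ p ^ (k + m - l) = 1 := by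
  have : k + m - l = k + (m - l) := by have := h.hlm; omega
  rw [this, pow_add, pow_mul, h.hb, ← pow_mul, ← pow_add]
  have : l + (m - l) = m := by have := h.hlm; omega
  rw [this, h.ha]

theorem zb (h : MCG p m k l r G a b) : b ^ ((p : ℤ) ^ k) = a ^ ((p : ℤ) ^ l) := by
  have := h.hb
  rw [← zpow_natCast, ← zpow_natCast] at this
  push_cast at this
  exact this

theorem zbe (h : MCG p m k l r G a b) : b ^ ((p : ℤ) ^ (k + m - l)) = 1 := by
  have := h.bpow
  rw [← zpow_natCast] at this
  push_cast at this
  exact this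

theorem wd (h : MCG p m k l r G a b) (X X' Y Y' : ℤ) (h1 : (p : ℤ) ^ l ∣ X - X')
    (h2 : (p : ℤ) ^ (k + m - l) ∣ (Y - Y') + p ^ (k - l) * (X - X')) :
    a ^ X * b ^ Y = a ^ X' * b ^ Y' := by
  obtain ⟨x, hx⟩ := h1
  obtain ⟨y, hy⟩ := h2
  have e1 : X = X' + p ^ l * x := by linarith
  have e3 : (p : ℤ) ^ (k - l) * (p ^ l * x) = p ^ k * x := by
    rw [← mul_assoc, ← pow_add, Nat.sub_add_cancel h.hlk]
  have e2 : Y = p ^ (k + m - l) * y + (- (p ^ k * x) + Y') := by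
    rw [hx, e3] at hy; linarith
  rw [e1, e2, zpow_add, zpow_mul, ← h.zb, zpow_add, zpow_add, zpow_mul, h.zbe, one_zpow, zpow_neg, zpow_mul]
  group

theorem exists_equiv (h : MCG p m k l r G a b) :
    ∃ f : ZMod (p ^ l) × ZMod (p ^ (k + m - l)) ≃ G, ∀ X Y : ℤ,
      f (X, ((Y + p ^ (k - l) * X : ℤ) : ZMod (p ^ (k + m - l)))) = a ^ X * b ^ Y := by
  haveI := h.fin
  haveI : NeZero (p ^ l) := ⟨pow_ne_zero _ h.hp.ne_zero⟩
  haveI : NeZero (p ^ (k + m - l)) := ⟨pow_ne_zero _ h.hp.ne_zero⟩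
  let f : ZMod (p ^ l) × ZMod (p ^ (k + m - l)) → G := fun s =>
    a ^ (s.1.val : ℤ) * b ^ ((s.2.val : ℤ) - p ^ (k - l) * s.1.val)
  have hf : ∀ X Y : ℤ, f (X, ((Y + p ^ (k - l) * X : ℤ) : ZMod (p ^ (k + m - l)))) = a ^ X * b ^ Y := by
    intro X Y
    apply h.wd
    · have : ((((X : ZMod (p ^ l)).val : ℤ) - X : ℤ) : ZMod (p ^ l)) = 0 := by simp
      rw [ZMod.intCast_zmod_eq_zero_iff_dvd] at this
      exact_mod_cast this
    · have : ((((((Y + p ^ (k - l) * X : ℤ) : ZMod (p ^ (k + m - l)))).val : ℤ) - (Y + p ^ (k - l) * X) : ℤ) :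
          ZMod (p ^ (k + m - l))) = 0 := by simp
      rw [ZMod.intCast_zmod_eq_zero_iff_dvd] at this
      push_cast at this
      refine this.trans (dvd_of_eq ?_)
      simp only
      push_cast
      ring
  have hsurj : Function.Surjective f := by
    intro g
    obtain ⟨X, Y, rfl⟩ := h.exists_rep g
    exact ⟨_, by rw [hf X Y, zpow_natCast]⟩
  have hcard : Nat.card (ZMod (p ^ l) × ZMod (p ^ (k + m - l))) = Nat.card G := by
    rw [Nat.card_prod, Nat.card_zmod, Nat.card_zmod, h.card, ← pow_add]
    congr 1
    have := h.hlk; have := h.hlm; omega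
  exact ⟨Equiv.ofBijective f ((Nat.bijective_iff_surjective_and_card f).2 ⟨hsurj, hcard⟩), hf⟩

theorem inj (h : MCG p m k l r G a b) (X X' Y Y' : ℤ) :
    a ^ X * b ^ Y = a ^ X' * b ^ Y' ↔ (p : ℤ) ^ l ∣ X - X' ∧
      (p : ℤ) ^ (k + m - l) ∣ (Y - Y') + p ^ (k - l) * (X - X') := by
  refine ⟨fun hE => ?_, fun hh => h.wd _ _ _ _ hh.1 hh.2⟩
  obtain ⟨f, hf⟩ := h.exists_equiv
  rw [← hf, ← hf] at hE
  have := f.injective hE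
  rw [Prod.mk.injEq, ← sub_eq_zero, ← Int.cast_sub, ZMod.intCast_zmod_eq_zero_iff_dvd, ← sub_eq_zero, ← Int.cast_sub,
    ZMod.intCast_zmod_eq_zero_iff_dvd] at this
  push_cast at this
  refine ⟨this.1, this.2.trans (dvd_of_eq ?_)⟩
  ring

end MCG


namespace MCG

variable {p m k l r : ℕ} {G : Type} [Group G] {a b : G}

theorem inj_one (h : MCG p m k l r G a b) (X : ℤ) (Y : ℕ) :
    a ^ X * b ^ Y = 1 ↔ (p : ℤ) ^ l ∣ X ∧ (p : ℤ) ^ (k + m - l) ∣ Y + p ^ (k - l) * X := by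
  have := h.inj X 0 Y 0
  simpa using this

theorem vpow (h : MCG p m k l r G a b) (Y : ℕ) : (p : ℤ) ^ r ∣ (1 + (p : ℤ) ^ r) ^ Y - 1 := by
  have := sub_one_dvd_pow_sub_one (1 + (p : ℤ) ^ r) Y
  simpa using this

theorem small (h : MCG p m k l r G a b) {A B : ℤ} (hA : (p : ℤ) ^ l ∣ A) (hB : (p : ℤ) ^ r ∣ B) :
    (p : ℤ) ^ (k + m - l) ∣ p ^ (k - l) * (A * B) := by
  have h1 : (p : ℤ) ^ (k - l + (l + r)) ∣ p ^ (k - l) * (A * B) := by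
    rw [pow_add, pow_add]
    exact mul_dvd_mul dvd_rfl (mul_dvd_mul hA hB)
  refine (pow_dvd_pow _ ?_).trans h1
  have := h.hlk; have := h.hmr; omega

theorem pow_eq_one (h : MCG p m k l r G a b) (X : ℤ) (Y i : ℕ) :
    (a ^ X * b ^ Y) ^ p ^ i = 1 ↔ (p : ℤ) ^ l ∣ p ^ i * X ∧
      (p : ℤ) ^ (k + m - l) ∣ p ^ i * (Y + p ^ (k - l) * X) := by
  obtain ⟨ε, h1, h2⟩ := nt_geom h.hp h.h3 h.hr _ (h.vpow Y) i
  rw [h.pow_rep, h1, h.inj_one]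
  have e1 : (p : ℤ) ^ l ∣ X * (p ^ i * ε) ↔ (p : ℤ) ^ l ∣ p ^ i * X := by
    have : X * ((p : ℤ) ^ i * ε) = p ^ i * X * ε := by ring
    rw [this]
    exact ⟨fun hh => (nt_coprime h.hp h.hr h2 l).dvd_of_dvd_mul_right hh, fun hh => dvd_mul_of_dvd_left hh _⟩
  rw [e1]
  refine and_congr_right fun h4 => ?_
  have h5 := h.small h4 h2
  have e2 : ((Y * p ^ i : ℕ) : ℤ) + p ^ (k - l) * (X * (p ^ i * ε)) =
    p ^ i * (Y + p ^ (k - l) * X) + p ^ (k - l) * (p ^ i * X * (ε - 1)) := by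
    push_cast; ring
  rw [e2]
  exact dvd_add_left h5

theorem pow_mul_closed (h : MCG p m k l r G a b) (i : ℕ) (g g' : G) (hg : g ^ p ^ i = 1) (hg' : g' ^ p ^ i = 1) :
    (g * g') ^ p ^ i = 1 := by
  obtain ⟨X, Y, rfl⟩ := h.exists_rep g
  obtain ⟨X', Y', rfl⟩ := h.exists_rep g'
  rw [h.mul_rep, h.pow_eq_one]
  rw [h.pow_eq_one] at hg hg'
  constructor
  · have : (p : ℤ) ^ i * (X + (1 + (p : ℤ) ^ r) ^ Y * X') = p ^ i * X + (1 + (p : ℤ) ^ r) ^ Y * (p ^ i * X') := by ring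
    rw [this]
    exact dvd_add hg.1 (dvd_mul_of_dvd_right hg'.1 _)
  · have : (p : ℤ) ^ i * ((Y + Y' : ℕ) + p ^ (k - l) * (X + (1 + (p : ℤ) ^ r) ^ Y * X')) =
      p ^ i * (Y + p ^ (k - l) * X) + p ^ i * (Y' + p ^ (k - l) * X') +
        p ^ (k - l) * (p ^ i * X' * ((1 + (p : ℤ) ^ r) ^ Y - 1)) := by push_cast; ring
    rw [this]
    exact dvd_add (dvd_add hg.2 hg'.2) (h.small hg'.1 (h.vpow Y))

theorem mem_omega (h : MCG p m k l r G a b) (i : ℕ) (g : G) : g ∈ OmegaSubgroup p G i ↔ g ^ p ^ i = 1 := by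
  constructor
  · intro hg
    let T : Subgroup G :=
      { carrier := {g | g ^ p ^ i = 1}
        mul_mem' := fun {x y} hx hy => h.pow_mul_closed i x y hx hy
        one_mem' := by simp
        inv_mem' := fun {x} hx => by
          simp only [Set.mem_ofPred_eq] at hx ⊢
          rw [inv_pow, hx, inv_one] }
    have : OmegaSubgroup p G i ≤ T := by
      rw [OmegaSubgroup, Subgroup.closure_le]
      intro x hx
      exact hx
    exact this hg
  · intro hg
    exact Subgroup.subset_closure hg

theorem card_tors {p : ℕ} (hp : p.Prime) (i s : ℕ) :
    Nat.card {x : ZMod (p ^ s) // (p : ZMod (p ^ s)) ^ i * x = 0} = p ^ min i s := by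
  haveI : NeZero (p ^ s) := ⟨pow_ne_zero _ hp.ne_zero⟩
  have h := IsAddCyclic.card_nsmulAddMonoidHom_ker (G := ZMod (p ^ s)) (p ^ i)
  rw [Nat.card_zmod, Nat.gcd_comm] at h
  have h2 : Nat.gcd (p ^ i) (p ^ s) = p ^ min i s := by
    rcases le_total i s with h | h
    · rw [min_eq_left h]; exact Nat.gcd_eq_left (pow_dvd_pow _ h)
    · rw [min_eq_right h]; exact Nat.gcd_eq_right (pow_dvd_pow _ h)
  rw [← h2, ← h]
  refine Nat.card_congr (Equiv.subtypeEquivRight fun x => ?_)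
  rw [AddMonoidHom.mem_ker]
  simp

theorem card_omega (h : MCG p m k l r G a b) (i : ℕ) :
    Nat.card (OmegaSubgroup p G i) = p ^ (min i l + min i (k + m - l)) := by
  obtain ⟨f, hf⟩ := h.exists_equiv
  rw [pow_add, ← card_tors h.hp, ← card_tors h.hp, ← Nat.card_prod]
  symm
  refine Nat.card_congr ((Equiv.subtypeProdEquivProd).symm.trans (f.subtypeEquiv ?_))
  intro x
  rw [h.mem_omega]
  obtain ⟨X, Y, hXY⟩ := h.exists_rep (f x)
  have h2 := hf X Y
  rw [zpow_natCast, ← hXY] at h2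
  have h5 := f.injective h2
  rw [hXY, h.pow_eq_one, ← h5]
  have e1 := ZMod.intCast_zmod_eq_zero_iff_dvd (p ^ i * X) (p ^ l)
  have e2 := ZMod.intCast_zmod_eq_zero_iff_dvd (p ^ i * (Y + p ^ (k - l) * X)) (p ^ (k + m - l))
  push_cast at e1 e2
  rw [← e1, ← e2]
  push_cast
  rfl

theorem omegaInv_eq (h : MCG p m k l r G a b) (i : ℕ) (hi : 1 ≤ i) :
    omegaInv p G i = (if i ≤ l then 1 else 0) + (if i ≤ k + m - l then 1 else 0) := by
  haveI := h.fin
  rw [omegaInv]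
  have hle : OmegaSubgroup p G (i - 1) ≤ OmegaSubgroup p G i := by
    intro g hg
    rw [h.mem_omega] at hg ⊢
    have : i = (i - 1) + 1 := by omega
    rw [this, pow_succ, pow_mul, hg, one_pow]
  have h1 := Subgroup.relIndex_mul_relIndex ⊥ _ _ bot_le hle
  rw [Subgroup.relIndex_bot_left, Subgroup.relIndex_bot_left, h.card_omega, h.card_omega] at h1
  have h2 : min i l + min i (k + m - l) = (min (i - 1) l + min (i - 1) (k + m - l)) +
     ((if i ≤ l then 1 else 0) + (if i ≤ k + m - l then 1 else 0)) := by
    split_ifs <;> omega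
  rw [h2, pow_add p (min (i - 1) l + min (i - 1) (k + m - l))] at h1
  have h3 := Nat.eq_of_mul_eq_mul_left (pow_pos h.hp.pos _) h1
  rw [h3, h.hp.factorization_pow, Finsupp.single_eq_same]

theorem card_Icc_aux (s : ℕ) : Nat.card {i : ℕ // 1 ≤ i ∧ i ≤ s} = s := by
  have : Nat.card {i : ℕ // i ∈ Finset.Icc 1 s} = s := by
    rw [Nat.card_eq_fintype_card, Fintype.card_coe]; simp
  exact (Nat.card_congr (Equiv.subtypeEquivRight fun i => by simp)).trans this

theorem muInv_eq (h : MCG p m k l r G a b) :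
    muInv p G 1 = k + m - l ∧ muInv p G 2 = l ∧ ∀ j, 3 ≤ j → muInv p G j = 0 := by
  have hle : l ≤ k + m - l := by have := h.hlk; have := h.hlm; omega
  refine ⟨?_, ?_, ?_⟩
  · rw [muInv]
    refine Eq.trans (Nat.card_congr (Equiv.subtypeEquivRight fun i => ?_)) (card_Icc_aux (k + m - l))
    refine and_congr_right fun hi => ?_
    rw [h.omegaInv_eq i hi]; split_ifs <;> omega
  · rw [muInv]
    refine Eq.trans (Nat.card_congr (Equiv.subtypeEquivRight fun i => ?_)) (card_Icc_aux l)
    refine and_congr_right fun hi => ?_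
    rw [h.omegaInv_eq i hi]; split_ifs <;> omega
  · intro j hj
    rw [muInv]
    haveI : IsEmpty {i : ℕ // 1 ≤ i ∧ j ≤ omegaInv p G i} := ⟨by
      rintro ⟨i, hi, hij⟩
      rw [h.omegaInv_eq i hi] at hij
      split_ifs at hij <;> omega⟩
    exact Nat.card_of_isEmpty

theorem hasType (h : MCG p m k l r G a b) : HasTypeInvariants p G [k + m - l, l] := by
  obtain ⟨h1, h2, h3⟩ := h.muInv_eq
  intro i
  match i with
  | 0 => simpa using h1
  | 1 => simpa using h2
  | i + 2 => rw [h3 _ (by omega)]; simp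

end MCG


theorem class2_pow {G : Type} [Group G] (x y c : G) (hx : Commute c x) (hy : Commute c y)
    (h : y * x = c * (x * y)) (n : ℕ) : (x * y) ^ n = c ^ (∑ i ∈ Finset.range n, i) * (x ^ n * y ^ n) := by
  have h1 : ∀ n : ℕ, y ^ n * x = c ^ n * (x * y ^ n) := by
    intro n
    induction n with
    | zero => simp
    | succ n ih =>
      calc y ^ (n + 1) * x = y ^ n * (y * x) := by rw [pow_succ, mul_assoc]
        _ = y ^ n * c * (x * y) := by rw [h, mul_assoc]
        _ = c * (y ^ n * x) * y := by rw [← (hy.pow_right n).eq]; simp only [mul_assoc]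
        _ = c ^ (n + 1) * (x * y ^ (n + 1)) := by rw [ih, pow_succ', pow_succ]; simp only [mul_assoc]
  induction n with
  | zero => simp
  | succ n ih =>
    calc (x * y) ^ (n + 1) = c ^ (∑ i ∈ Finset.range n, i) * (x ^ n * (y ^ n * x) * y) := by
          rw [pow_succ, ih]; simp only [mul_assoc]
      _ = c ^ (∑ i ∈ Finset.range n, i) * ((x ^ n * c ^ n) * (x * y ^ n) * y) := by
          rw [h1]; simp only [mul_assoc]
      _ = _ := by
          rw [← ((hx.pow_left n).pow_right n).eq, Finset.sum_range_succ, pow_add, pow_succ x, pow_succ y]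
          simp only [mul_assoc]

namespace MCG

variable {p m k l r : ℕ} {G : Type} [Group G] {a b : G}

theorem conj_z (h : MCG p m k l r G a b) (g : G) :
    ∃ w : ℤ, (p : ℤ) ∣ w - 1 ∧ ∀ z ∈ Subgroup.zpowers a, g * z * g⁻¹ = z ^ w := by
  obtain ⟨X, Y, rfl⟩ := h.exists_rep g
  refine ⟨(1 + (p : ℤ) ^ r) ^ Y, ?_, ?_⟩
  · exact (dvd_pow_self _ (by have := h.hr; omega)).trans (h.vpow Y)
  · intro z hz
    obtain ⟨Z, rfl⟩ := Subgroup.mem_zpowers_iff.1 hz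
    have h1 := h.conj_pow Z Y
    calc a ^ X * b ^ Y * a ^ Z * (a ^ X * b ^ Y)⁻¹ = a ^ X * (b ^ Y * a ^ Z) * (b ^ Y)⁻¹ * (a ^ X)⁻¹ := by group
      _ = _ := by rw [h1, ← zpow_mul, mul_comm Z]; group

theorem sub_normal (h : MCG p m k l r G a b) (T : Subgroup G) (hT : T ≤ Subgroup.zpowers a) : T.Normal := ⟨by
  intro z hz g
  obtain ⟨w, -, hw⟩ := h.conj_z g
  rw [hw z (hT hz)]
  exact Subgroup.zpow_mem _ hz _⟩

theorem ar (h : MCG p m k l r G a b) (X : ℤ) : ⁅b, a ^ X⁆ = a ^ ((p : ℤ) ^ r * X) := by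
  have h1 := h.conj_pow X 1
  rw [pow_one, pow_one] at h1
  rw [commutatorElement_def, h1, mul_inv_cancel_right, ← zpow_neg, ← zpow_add]
  congr 1; ring

theorem comm_le (h : MCG p m k l r G a b) : ⁅(⊤ : Subgroup G), ⊤⁆ ≤ Subgroup.zpowers (a ^ ((p : ℤ) ^ r)) := by
  have hle : Subgroup.zpowers (a ^ ((p : ℤ) ^ r)) ≤ Subgroup.zpowers a := by
    rw [Subgroup.zpowers_le]; exact Subgroup.zpow_mem _ (Subgroup.mem_zpowers a) _
  have hn := h.sub_normal _ hle
  have h1 : ⁅b, a⁆ ∈ Subgroup.zpowers (a ^ ((p : ℤ) ^ r)) := by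
    have := h.ar 1
    rw [zpow_one, mul_one] at this
    rw [this]; exact Subgroup.mem_zpowers _
  have := aux_comm_le (Subgroup.zpowers (a ^ ((p : ℤ) ^ r))) {a, b} (fun g _ t ht => hn.conj_mem t ht g) (by
        rintro x (rfl | rfl) y (rfl | rfl)
        · simp
        · rw [← commutatorElement_inv]; exact inv_mem h1
        · exact h1
        · simp)
  rwa [h.gen] at this

theorem is_comm_iff (h : MCG p m k l r G a b) (z : G) :
    (∃ g g' : G, z = ⁅g, g'⁆) ↔ ∃ X : ℤ, z = a ^ ((p : ℤ) ^ r * X) := by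
  constructor
  · rintro ⟨g, g', rfl⟩
    obtain ⟨X, hX⟩ := Subgroup.mem_zpowers_iff.1 (h.comm_le (Subgroup.commutator_mem_commutator (g₁ := g) (g₂ := g') trivial trivial))
    exact ⟨X, by rw [← hX, zpow_mul]⟩
  · rintro ⟨X, rfl⟩
    exact ⟨b, a ^ X, (h.ar X).symm⟩

theorem regular (h : MCG p m k l r G a b) : IsRegularPGroup p G := by
  intro x y
  obtain ⟨D, hD⟩ : ∃ D, D = ⁅Subgroup.closure {x, y}, Subgroup.closure {x, y}⁆ := ⟨_, rfl⟩
  rw [← hD]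
  have hDa : D ≤ Subgroup.zpowers a := by
    rw [hD]
    refine (Subgroup.commutator_mono le_top le_top).trans (h.comm_le.trans ?_)
    rw [Subgroup.zpowers_le]; exact Subgroup.zpow_mem _ (Subgroup.mem_zpowers a) _
  have hND : MhoOne p D ≤ D := by
    rw [MhoOne, Subgroup.closure_le]
    rintro _ ⟨z, hz, rfl⟩
    exact Subgroup.pow_mem _ hz _
  haveI hN : (MhoOne p D).Normal := h.sub_normal _ (hND.trans hDa)
  have hpD : ∀ z ∈ D, z ^ p ∈ MhoOne p D := fun z hz => Subgroup.subset_closure ⟨z, hz, rfl⟩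
  have hc : ⁅y, x⁆ ∈ D := by
    rw [hD]
    exact Subgroup.commutator_mem_commutator (Subgroup.subset_closure (by simp)) (Subgroup.subset_closure (by simp))
  obtain ⟨c, hcc⟩ : ∃ c, c = ⁅y, x⁆ := ⟨_, rfl⟩
  rw [← hcc] at hc
  let π := QuotientGroup.mk' (MhoOne p D)
  have hcen : ∀ g : G, Commute (π c) (π g) := by
    intro g
    obtain ⟨w, ⟨t, ht⟩, hw⟩ := h.conj_z g
    have h1 := hw c (hDa hc)
    have h2 : c ^ w = c * (c ^ p) ^ t := by
      have : w = 1 + p * t := by linarith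
      rw [this, zpow_add, zpow_one, zpow_mul, zpow_natCast]
    have h3 : π (c ^ p) = 1 := (QuotientGroup.eq_one_iff _).2 (hpD c hc)
    have h4 := congrArg π h1
    rw [h2, map_mul, map_mul, map_mul, map_zpow, h3, one_zpow, mul_one, map_inv] at h4
    exact (mul_inv_eq_iff_eq_mul.1 h4).symm
  have hyx : π y * π x = π c * (π x * π y) := by
    rw [← map_mul, ← map_mul, ← map_mul, hcc, commutatorElement_def]
    congr 1; group
  have h1 := class2_pow (π x) (π y) (π c) (hcen x) (hcen y) hyx p
  obtain ⟨f, hf⟩ := nt_dvd_sum h.hp h.h3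
  have hf2 : p ∣ ∑ i ∈ Finset.range p, i := by
    have : (p : ℤ) ∣ ((∑ i ∈ Finset.range p, i : ℕ) : ℤ) := ⟨f, by push_cast; exact hf⟩
    exact_mod_cast this
  obtain ⟨f', hf'⟩ := hf2
  have h3 : π c ^ p = 1 := by
    rw [← map_pow]; exact (QuotientGroup.eq_one_iff _).2 (hpD c hc)
  rw [hf', pow_mul, h3, one_pow, one_mul, ← map_mul, ← map_pow, ← map_pow, ← map_pow, ← map_mul] at h1
  exact ⟨((x * y) ^ p)⁻¹ * (x ^ p * y ^ p), QuotientGroup.eq.1 h1, (mul_inv_cancel_left _ _).symm⟩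

theorem inv3 (h : MCG p m k l r G a b) (j : ℕ) :
    (∀ z : G, (∃ g g' : G, z = ⁅g, g'⁆) → z ^ p ^ j = 1) ↔ m ≤ r + j := by
  have hp2 := h.hp.two_le
  have h1 : (∀ z : G, (∃ g g' : G, z = ⁅g, g'⁆) → z ^ p ^ j = 1) ↔ (a ^ ((p : ℤ) ^ r)) ^ p ^ j = 1 := by
    constructor
    · intro hh
      exact hh _ ((h.is_comm_iff _).2 ⟨1, by rw [mul_one]⟩)
    · intro hh z hz
      obtain ⟨X, rfl⟩ := (h.is_comm_iff z).1 hz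
      rw [zpow_mul, ← zpow_natCast, ← zpow_mul, mul_comm X, zpow_mul, zpow_natCast, hh, one_zpow]
  rw [h1]
  have h2 := h.pow_eq_one ((p : ℤ) ^ r) 0 j
  rw [pow_zero, mul_one] at h2
  rw [h2, ← pow_add, Nat.cast_zero, zero_add, ← pow_add, ← pow_add]
  have hdv : ∀ s t : ℕ, (p : ℤ) ^ s ∣ p ^ t ↔ s ≤ t := fun s t => by
    rw [← Nat.cast_pow, ← Nat.cast_pow, Int.natCast_dvd_natCast, Nat.pow_dvd_pow_iff_le_right hp2]
  rw [hdv, hdv]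
  have := h.hlk; have := h.hlm
  omega

theorem inv1 (h : MCG p m k l r G a b) (hrl : r ≤ l) (j : ℕ) :
    (∀ x : G, ∃ g g' : G, x ^ p ^ j = ⁅g, g'⁆) ↔ k ≤ j := by
  have hp2 := h.hp.two_le
  have hdv : ∀ s t : ℕ, (p : ℤ) ^ s ∣ p ^ t ↔ s ≤ t := fun s t => by
    rw [← Nat.cast_pow, ← Nat.cast_pow, Int.natCast_dvd_natCast, Nat.pow_dvd_pow_iff_le_right hp2]
  have hlk := h.hlk; have hlm := h.hlm
  constructor
  · intro hh
    obtain ⟨z, hz⟩ := (h.is_comm_iff _).1 (hh b)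
    have h1 := (h.inj 0 (p ^ r * z) (p ^ j) 0).1 (by
      rw [zpow_zero, zpow_zero, one_mul, mul_one, ← hz, ← zpow_natCast]; push_cast; rfl)
    obtain ⟨h1, h2⟩ := h1
    rw [← hdv]
    have h5 : (p : ℤ) ^ k ∣ p ^ (k - l) * (0 - p ^ r * z) := by
      have : (p : ℤ) ^ k = p ^ (k - l) * p ^ l := by rw [← pow_add, Nat.sub_add_cancel hlk]
      rw [this]
      exact mul_dvd_mul dvd_rfl h1
    have h6 := ((hdv k (k + m - l)).2 (by omega)).trans h2
    rw [dvd_add_left h5, sub_zero] at h6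
    exact h6
  · intro hkj x
    obtain ⟨X, Y, rfl⟩ := h.exists_rep x
    rw [h.is_comm_iff, h.pow_rep]
    obtain ⟨ε, h1, h2⟩ := nt_geom h.hp h.h3 h.hr _ (h.vpow Y) j
    refine ⟨p ^ (j - r) * X * ε + p ^ (l - r) * p ^ (j - k) * Y, ?_⟩
    have hb : b ^ (Y * p ^ j) = a ^ ((p : ℤ) ^ l * (p ^ (j - k) * Y)) := by
      rw [zpow_mul, ← h.zb, ← zpow_mul, ← zpow_natCast]
      congr 1
      push_cast
      rw [← mul_assoc, ← pow_add, Nat.add_sub_cancel' hkj, mul_comm]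
    rw [h1, hb, ← zpow_add]
    congr 1
    have e1 : (p : ℤ) ^ j = p ^ r * p ^ (j - r) := by rw [← pow_add]; congr 1; omega
    have e2 : (p : ℤ) ^ l = p ^ r * p ^ (l - r) := by rw [← pow_add]; congr 1; omega
    rw [e1, e2]; ring

theorem uniq {G' : Type} [Group G'] {a' b' : G'} (h : MCG p m k l r G a b) (h' : MCG p m k l r G' a' b') :
    Nonempty (G ≃* G') := by
  obtain ⟨f, hf⟩ := h.exists_equiv
  obtain ⟨f', hf'⟩ := h'.exists_equiv
  have key : ∀ (X : ℤ) (Y : ℕ), (f.symm.trans f') (a ^ X * b ^ Y) = a' ^ X * b' ^ Y := by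
    intro X Y
    have h1 := hf X Y
    have h2 := hf' X Y
    rw [zpow_natCast] at h1 h2
    rw [Equiv.trans_apply, ← h1, Equiv.symm_apply_apply, h2]
  refine ⟨MulEquiv.mk' (f.symm.trans f') ?_⟩
  intro x y
  obtain ⟨X, Y, rfl⟩ := h.exists_rep x
  obtain ⟨X', Y', rfl⟩ := h.exists_rep y
  rw [h.mul_rep, key, key, key, h'.mul_rep]

theorem params {m' k' r' : ℕ} {G' : Type} [Group G'] {a' b' : G'} (h : MCG p m k l r G a b)
    (h' : MCG p m' k' l r' G' a' b') (hrl : r ≤ l) (hrl' : r' ≤ l) (φ : G ≃* G') :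
    m = m' ∧ k = k' ∧ r = r' := by
  have c : ∀ z : G, (∃ g g' : G, z = ⁅g, g'⁆) ↔ ∃ g g' : G', φ z = ⁅g, g'⁆ := by
    intro z
    constructor
    · rintro ⟨g, g', rfl⟩
      exact ⟨φ g, φ g', map_commutatorElement φ g g'⟩
    · rintro ⟨g, g', hg⟩
      refine ⟨φ.symm g, φ.symm g', ?_⟩
      rw [← map_commutatorElement, ← hg, MulEquiv.symm_apply_apply]
  have h1 : ∀ j, k ≤ j ↔ k' ≤ j := by
    intro j
    rw [← h.inv1 hrl, ← h'.inv1 hrl']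
    constructor
    · intro hh x
      have := (c _).1 (hh (φ.symm x))
      rwa [map_pow, MulEquiv.apply_symm_apply] at this
    · intro hh x
      apply (c _).2
      rw [map_pow]; exact hh _
  have h3 : ∀ j, m ≤ r + j ↔ m' ≤ r' + j := by
    intro j
    rw [← h.inv3, ← h'.inv3]
    constructor
    · intro hh x hx
      have := hh (φ.symm x) ((c _).2 (by rwa [MulEquiv.apply_symm_apply]))
      rw [← map_pow, MulEquiv.map_eq_one_iff] at this
      exact this
    · intro hh x hx
      have := hh (φ x) ((c _).1 hx)
      rw [← map_pow, MulEquiv.map_eq_one_iff] at this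
      exact this
  have hk : k = k' := le_antisymm ((h1 _).2 le_rfl) ((h1 _).1 le_rfl)
  have hm : m + k = m' + k' := by
    have := Nat.card_congr φ.toEquiv
    rw [h.card, h'.card] at this
    exact Nat.pow_right_injective h.hp.two_le this
  have h5 := h3 (m - r)
  have h6 := h3 (m' - r')
  have := h.hlm; have := h'.hlm
  omega

end MCG


theorem exists_model {p m k l r : ℕ} (hp : p.Prime) (h3 : 3 ≤ p) (hr : 1 ≤ r) (hlk : l ≤ k) (hlm : l ≤ m)
    (hmr : m ≤ l + r) : ∃ (G : Type) (_ : Group G) (a b : G), MCG p m k l r G a b := by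
  haveI : NeZero (p ^ m) := ⟨pow_ne_zero _ hp.ne_zero⟩
  have hcop : IsUnit ((1 + p ^ r : ℕ) : ZMod (p ^ m)) := by
    rw [ZMod.isUnit_iff_coprime]
    apply Nat.Coprime.pow_right
    rw [Nat.coprime_comm, hp.coprime_iff_not_dvd]
    intro h
    rw [Nat.dvd_add_left (dvd_pow_self p (by omega))] at h
    exact hp.one_lt.ne' (Nat.dvd_one.1 h)
  obtain ⟨u, hu⟩ := hcop
  let σ : MulAut (Multiplicative (ZMod (p ^ m))) := AddEquiv.toMultiplicative (AddAut.mulLeft u)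
  have hσ : ∀ x : ZMod (p ^ m), σ (Multiplicative.ofAdd x) = Multiplicative.ofAdd (u * x) := fun x => rfl
  have hσn : ∀ (n : ℕ) (x : ZMod (p ^ m)), (σ ^ n) (Multiplicative.ofAdd x) = Multiplicative.ofAdd ((u : ZMod (p ^ m)) ^ n * x) := by
    intro n
    induction n with
    | zero => intro x; simp
    | succ n ih =>
      intro x
      rw [pow_succ, MulAut.mul_apply, hσ, ih, pow_succ, mul_assoc]
  let φ := zpowersHom (MulAut (Multiplicative (ZMod (p ^ m)))) σ
  have hφ : φ (Multiplicative.ofAdd 1) = σ := by simp [φ]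
  let a : Multiplicative (ZMod (p ^ m)) ⋊[φ] Multiplicative ℤ := SemidirectProduct.inl (Multiplicative.ofAdd 1)
  let b : Multiplicative (ZMod (p ^ m)) ⋊[φ] Multiplicative ℤ := SemidirectProduct.inr (Multiplicative.ofAdd 1)
  have haX : ∀ X : ℤ, a ^ X = SemidirectProduct.inl (Multiplicative.ofAdd (X : ZMod (p ^ m))) := by
    intro X
    rw [← map_zpow, ← ofAdd_zsmul, zsmul_one]
  have han : ∀ n : ℕ, a ^ n = SemidirectProduct.inl (Multiplicative.ofAdd (n : ZMod (p ^ m))) := by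
    intro X
    rw [← map_pow, ← ofAdd_nsmul, nsmul_one]
  have hbY : ∀ Y : ℤ, b ^ Y = SemidirectProduct.inr (Multiplicative.ofAdd Y) := by
    intro Y
    rw [← map_zpow, ← ofAdd_zsmul]; simp
  have hrep : ∀ g : Multiplicative (ZMod (p ^ m)) ⋊[φ] Multiplicative ℤ, ∃ X Y : ℤ, g = a ^ X * b ^ Y := by
    intro g
    obtain ⟨X, hX⟩ := ZMod.intCast_surjective g.left.toAdd
    refine ⟨X, g.right.toAdd, ?_⟩
    rw [haX, hbY, hX]
    exact (SemidirectProduct.inl_left_mul_inr_right g).symm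
  have hconj : ∀ n x : ℕ, b ^ n * a ^ x * (b ^ n)⁻¹ = a ^ ((1 + p ^ r) ^ n * x) := by
    intro n x
    have hbn : b ^ n = SemidirectProduct.inr (Multiplicative.ofAdd 1 ^ n) := by rw [map_pow]
    rw [hbn, ← map_inv, han, ← SemidirectProduct.inl_aut, map_pow, hφ, hσn, han, hu]
    push_cast
    rfl
  have h1 : b * a * b⁻¹ = a ^ (1 + p ^ r) := by simpa using hconj 1 1
  have h2 : Commute (b ^ p ^ k) a := by
    have h := hconj (p ^ k) 1
    rw [pow_one, mul_one] at h
    have h4 : a ^ ((1 + p ^ r) ^ p ^ k) = a := by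
      rw [han]
      have : (((1 + p ^ r) ^ p ^ k : ℕ) : ZMod (p ^ m)) = 1 := by
        obtain ⟨ε, e1, -⟩ := nt_geom hp h3 hr (1 + (p : ℤ) ^ r) (by simp) k
        have e2 := geom_sum_mul (1 + (p : ℤ) ^ r) (p ^ k)
        rw [e1] at e2
        have e3 : (p : ℤ) ^ m ∣ (1 + (p : ℤ) ^ r) ^ p ^ k - 1 := by
          rw [← e2]
          refine (pow_dvd_pow _ (by omega : m ≤ k + r)).trans ⟨ε, ?_⟩
          rw [pow_add]; ring
        have e4 := (ZMod.intCast_zmod_eq_zero_iff_dvd ((1 + (p : ℤ) ^ r) ^ p ^ k - 1) (p ^ m)).2 (by push_cast; exact e3)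
        push_cast at e4 ⊢
        exact sub_eq_zero.1 e4
      rw [this]
    rw [h4] at h
    exact mul_inv_eq_iff_eq_mul.1 h
  have h4 : Commute b (a ^ p ^ l) := by
    have h := hconj 1 (p ^ l)
    rw [pow_one, pow_one] at h
    have h5 : a ^ ((1 + p ^ r) * p ^ l) = a ^ p ^ l := by
      rw [han, han]
      have : (((1 + p ^ r) * p ^ l : ℕ) : ZMod (p ^ m)) = ((p ^ l : ℕ) : ZMod (p ^ m)) := by
        have e : ((p ^ (l + r) : ℕ) : ZMod (p ^ m)) = 0 := by
          rw [ZMod.natCast_eq_zero_iff]; exact pow_dvd_pow _ hmr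
        rw [add_mul, one_mul, ← pow_add, Nat.cast_add, add_comm r, e, add_zero]
      rw [this]
    rw [h5] at h
    exact mul_inv_eq_iff_eq_mul.1 h
  obtain ⟨n0, hn0⟩ : ∃ n0, n0 = (b ^ p ^ k)⁻¹ * a ^ p ^ l := ⟨_, rfl⟩
  have hn0a : Commute n0 a := by
    rw [hn0]; exact h2.inv_left.mul_left ((Commute.refl a).pow_left _)
  have hn0b : Commute n0 b := by
    rw [hn0]; exact (((Commute.refl b).pow_left _).inv_left).mul_left h4.symm
  have hn0c : ∀ g, Commute n0 g := by
    intro g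
    obtain ⟨X, Y, rfl⟩ := hrep g
    exact (hn0a.zpow_right X).mul_right (hn0b.zpow_right Y)
  haveI hN : (Subgroup.zpowers n0).Normal := ⟨by
    intro z hz g
    obtain ⟨i, rfl⟩ := Subgroup.mem_zpowers_iff.1 hz
    rw [← ((hn0c g).zpow_left i).eq, mul_inv_cancel_right]
    exact hz⟩
  have hright : ∀ t : ℤ, ((n0 ^ t).right).toAdd = - (p ^ k * t) := by
    intro t
    have : (n0 ^ t).right = (SemidirectProduct.rightHom n0) ^ t := by rw [← map_zpow]; rfl
    rw [this, hn0, map_mul, map_inv, map_pow, map_pow]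
    simp [a, b]
    ring
  let π := QuotientGroup.mk' (Subgroup.zpowers n0)
  have hb' : π b ^ p ^ k = π a ^ p ^ l := by
    have e : π (b ^ p ^ k) = π (a ^ p ^ l) := QuotientGroup.eq.2 (by
      rw [← hn0]; exact Subgroup.mem_zpowers n0)
    exact (map_pow π b _).symm.trans (e.trans (map_pow π a _))
  refine ⟨_, inferInstance, π a, π b, ⟨hp, h3, ?_, ?_, ?_, hb', ?_, hr, hlk, hlm, hmr⟩⟩
  · let f : ZMod (p ^ m) × Fin (p ^ k) → (Multiplicative (ZMod (p ^ m)) ⋊[φ] Multiplicative ℤ) ⧸ Subgroup.zpowers n0 :=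
      fun s => π (SemidirectProduct.inl (Multiplicative.ofAdd s.1) * b ^ (s.2.val : ℤ))
    have hf : Function.Bijective f := by
      constructor
      · rintro ⟨x, y⟩ ⟨x', y'⟩ hxy
        have h5 := QuotientGroup.eq.1 hxy
        obtain ⟨t, ht⟩ := Subgroup.mem_zpowers_iff.1 h5
        rw [eq_inv_mul_iff_mul_eq] at ht
        have h6 := congrArg (fun g => (SemidirectProduct.right g).toAdd) ht
        simp only [SemidirectProduct.mul_right, toAdd_mul, hright, hbY, SemidirectProduct.right_inl,
          SemidirectProduct.right_inr, toAdd_one, toAdd_ofAdd, zero_add] at h6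
        have ht0 : t = 0 := by
          have hy := y.2
          have hy' := y'.2
          have hq : (0 : ℤ) < p ^ k := by exact_mod_cast pow_pos hp.pos k
          have hy2 : (y.val : ℤ) < p ^ k := by exact_mod_cast hy
          have hy2' : (y'.val : ℤ) < p ^ k := by exact_mod_cast hy'
          by_contra h0
          rcases lt_or_gt_of_ne h0 with h0 | h0
          · have : (p : ℤ) ^ k * t ≤ p ^ k * (-1) := by nlinarith
            omega
          · have : (p : ℤ) ^ k * t ≥ p ^ k * 1 := by nlinarith
            omega
        subst ht0
        have hyy : y = y' := by
          apply Fin.ext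
          simp at h6
          exact_mod_cast h6
        subst hyy
        rw [zpow_zero, mul_one] at ht
        have h7 := SemidirectProduct.inl_injective (mul_right_cancel ht)
        rw [Prod.mk.injEq]
        exact ⟨Multiplicative.ofAdd.injective h7, rfl⟩
      · intro g
        obtain ⟨g, rfl⟩ := QuotientGroup.mk'_surjective _ g
        obtain ⟨X, Y, rfl⟩ := hrep g
        have hq : (0 : ℤ) < p ^ k := by exact_mod_cast pow_pos hp.pos k
        have e0 := Int.emod_nonneg Y hq.ne'
        have e1 := Int.emod_lt_of_pos Y hq
        refine ⟨(((X + p ^ l * (Y / p ^ k) : ℤ) : ZMod (p ^ m)), ⟨(Y % p ^ k).toNat, by zify; rw [Int.toNat_of_nonneg e0]; exact e1⟩), ?_⟩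
        change π (SemidirectProduct.inl (Multiplicative.ofAdd ((X + p ^ l * (Y / p ^ k) : ℤ) : ZMod (p ^ m))) * b ^ (((Y % p ^ k).toNat : ℕ) : ℤ)) = π _
        rw [← haX, Int.toNat_of_nonneg e0]
        have e2 : π a ^ ((p : ℤ) ^ l) = π b ^ ((p : ℤ) ^ k) := by
          have := hb'.symm
          rw [← zpow_natCast, ← zpow_natCast] at this
          push_cast at this
          exact this
        rw [map_mul, map_mul, map_zpow, map_zpow, map_zpow, map_zpow, zpow_add, zpow_mul, e2, ← zpow_mul, mul_assoc, ← zpow_add,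
          Int.mul_ediv_add_emod]
    have := Nat.card_congr (Equiv.ofBijective f hf)
    rw [← this, Nat.card_prod, Nat.card_zmod, Nat.card_eq_fintype_card, Fintype.card_fin, pow_add]
  · rw [eq_top_iff]
    intro g _
    obtain ⟨g, rfl⟩ := QuotientGroup.mk'_surjective _ g
    obtain ⟨X, Y, rfl⟩ := hrep g
    rw [map_mul, map_zpow, map_zpow]
    exact mul_mem (Subgroup.zpow_mem _ (aux_mem_l _ _) _) (Subgroup.zpow_mem _ (aux_mem_r _ _) _)
  · rw [← map_pow, han]
    simp
  · rw [← map_mul, ← map_inv, ← map_mul, h1, map_pow]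


theorem raw_conj {G : Type} [Group G] {a b : G} {v : ℤ} (h : b * a * b⁻¹ = a ^ v) (X : ℤ) (Y : ℕ) :
    b ^ Y * a ^ X * (b ^ Y)⁻¹ = a ^ (v ^ Y * X) := by
  induction Y generalizing X with
  | zero => simp
  | succ Y ih =>
    have h1 : b * a ^ X * b⁻¹ = a ^ (v * X) := by rw [← conj_zpow, h, zpow_mul]
    calc b ^ (Y + 1) * a ^ X * (b ^ (Y + 1))⁻¹ = b ^ Y * (b * a ^ X * b⁻¹) * (b ^ Y)⁻¹ := by
          rw [pow_succ]; group
      _ = _ := by rw [h1, ih]; congr 1; ring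

theorem raw_pow {G : Type} [Group G] {a b : G} {v : ℤ} (h : b * a * b⁻¹ = a ^ v) (X : ℤ) (q : ℕ) :
    (a ^ X * b) ^ q = a ^ (X * ∑ i ∈ Finset.range q, v ^ i) * b ^ q := by
  induction q with
  | zero => simp
  | succ q ih =>
    rw [pow_succ, ih, Finset.sum_range_succ, mul_add, zpow_add, mul_comm X (v ^ q), ← raw_conj h X q, pow_succ]
    group

theorem coprime_mem {p n : ℕ} (hp : p.Prime) {G : Type} [Group G] (hG : Nat.card G = p ^ n) (b : G) (j : ℤ)
    (hj : ¬ (p : ℤ) ∣ j) : b ∈ Subgroup.zpowers (b ^ j) := by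
  have hcop : IsCoprime (p : ℤ) j := (Int.prime_iff_natAbs_prime.2 (by simpa using hp)).coprime_iff_not_dvd.2 hj
  obtain ⟨α, β, hab⟩ := hcop.pow_left (m := n)
  refine Subgroup.mem_zpowers_iff.2 ⟨β, ?_⟩
  have h1 : b ^ ((p : ℤ) ^ n) = 1 := by
    rw [← Nat.cast_pow, zpow_natCast, ← hG, pow_card_eq_one']
  rw [← zpow_mul]
  calc b ^ (j * β) = b ^ (α * p ^ n + β * j) := by
        rw [zpow_add, mul_comm α, zpow_mul b (_ ^ n), h1, one_zpow, one_mul, mul_comm]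
    _ = b := by rw [hab, zpow_one]

theorem raw_hmr {p m l r : ℕ} (hp : p.Prime) {G : Type} [Group G] {a b : G} {k : ℕ} (ho : orderOf a = p ^ m)
    (hb : b ^ p ^ k = a ^ p ^ l) (hc : b * a * b⁻¹ = a ^ (1 + p ^ r)) : m ≤ l + r := by
  have h1 : b * a ^ p ^ l * b⁻¹ = a ^ p ^ l := by
    rw [← hb]; group
  rw [← conj_pow, hc, ← pow_mul, add_mul, pow_add, one_mul, mul_eq_left, ← pow_add, add_comm r] at h1
  have := orderOf_dvd_of_pow_eq_one h1
  rw [ho] at this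
  exact (Nat.pow_dvd_pow_iff_le_right hp.one_lt).1 this

theorem classify0 {p n : ℕ} (hp : p.Prime) (h3 : 3 ≤ p) {G : Type} [Group G] (hG : Nat.card G = p ^ n) (a b : G)
    (hgen : Subgroup.closure {a, b} = ⊤) (hba : b * a * b⁻¹ ∈ Subgroup.zpowers a) :
    ∃ (m k l r : ℕ) (a b : G), MCG p m k l r G a b := by
  haveI : Finite G := Nat.finite_of_card_ne_zero (by rw [hG]; exact pow_ne_zero _ hp.ne_zero)
  obtain ⟨m, hmn, hm⟩ := (Nat.dvd_prime_pow hp).1 (hG ▸ orderOf_dvd_natCard a)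
  have hz1 : ∀ z : ℤ, a ^ z = 1 ↔ (p : ℤ) ^ m ∣ z := by
    intro z
    rw [← orderOf_dvd_iff_zpow_eq_one, hm]; push_cast; rfl
  -- step 0: normalise the action
  obtain ⟨b, r, hgen, hr, hc⟩ : ∃ (b : G) (r : ℕ), Subgroup.closure {a, b} = ⊤ ∧ 1 ≤ r ∧ b * a * b⁻¹ = a ^ (1 + p ^ r) := by
    obtain ⟨v, hv⟩ := Subgroup.mem_zpowers_iff.1 hba
    by_cases hvm : (p : ℤ) ^ m ∣ v - 1
    · refine ⟨b, m + 1, hgen, by omega, ?_⟩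
      rw [← hv, pow_add, pow_one, ← sub_add_cancel v 1, zpow_add, (hz1 _).2 hvm, zpow_one, one_mul, pow_succ, pow_mul,
        ← hm, pow_orderOf_eq_one, one_pow, mul_one]
    · have hpv : (p : ℤ) ∣ v - 1 := by
        have hm0 : m ≠ 0 := by
          rintro rfl; exact hvm (by simp)
        have h1 := raw_conj hv.symm 1 (p ^ n)
        rw [← hG, pow_card_eq_one', hG] at h1
        have h2 : a ^ (v ^ p ^ n - 1) = 1 := by
          rw [zpow_sub, zpow_one, ← mul_one (v ^ p ^ n), ← h1]; group
        have h4 := (dvd_pow_self (p : ℤ) hm0).trans ((hz1 _).1 h2)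
        haveI : Fact p.Prime := ⟨hp⟩
        rw [← ZMod.intCast_zmod_eq_zero_iff_dvd] at h4 ⊢
        push_cast at h4 ⊢
        rwa [ZMod.pow_card_pow] at h4
      obtain ⟨r, j, hr, hrm, hj, hvj⟩ := nt_N hp h3 v hpv hvm
      refine ⟨b ^ j, r, ?_, hr, ?_⟩
      · rw [eq_top_iff, ← hgen]
        refine aux_closure_le (aux_mem_l _ _) ?_
        have h1 := coprime_mem hp hG b j (by
          intro h
          exact (hp.coprime_iff_not_dvd.1 hj) (by exact_mod_cast h))
        rw [zpow_natCast] at h1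
        exact (Subgroup.zpowers_le.2 (aux_mem_r _ _)) h1
      · have h1 := raw_conj hv.symm 1 j
        rw [zpow_one, mul_one] at h1
        rw [h1, ← zpow_natCast, ← mul_inv_eq_one, ← zpow_neg, ← zpow_add, hz1]
        push_cast
        exact hvj
  clear hba
  have hcz : b * a * b⁻¹ = a ^ (1 + (p : ℤ) ^ r) := by
    rw [hc, ← zpow_natCast]; push_cast; rfl
  haveI hn : (Subgroup.zpowers a).Normal := aux_zpowers_normal a b a hgen (by simp)
    (by rw [hc]; exact Subgroup.pow_mem _ (Subgroup.mem_zpowers a) _)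
  have hidx : (Subgroup.zpowers a).index = p ^ (n - m) := by
    have := Subgroup.card_mul_index (Subgroup.zpowers a)
    rw [Nat.card_zpowers, hm, hG, ← Nat.add_sub_cancel' hmn, pow_add] at this
    exact Nat.eq_of_mul_eq_mul_left (pow_pos hp.pos _) this
  obtain ⟨k, hk⟩ : ∃ k, k = n - m := ⟨_, rfl⟩
  rw [← hk] at hidx
  have hcard : Nat.card G = p ^ (m + k) := by rw [hG]; congr 1; omega
  have hbk : b ^ p ^ k ∈ Subgroup.zpowers a := by
    rw [← hidx]; exact Subgroup.pow_index_mem _ b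
  obtain ⟨z, hz⟩ := Subgroup.mem_zpowers_iff.1 hbk
  obtain ⟨a, l, hgen, hm, hcz, hlm, hb⟩ : ∃ (a : G) (l : ℕ), Subgroup.closure {a, b} = ⊤ ∧ orderOf a = p ^ m ∧
      b * a * b⁻¹ = a ^ (1 + (p : ℤ) ^ r) ∧ l ≤ m ∧ b ^ p ^ k = a ^ p ^ l := by
    by_cases hzm : (p : ℤ) ^ m ∣ z
    · refine ⟨a, m, hgen, hm, hcz, le_rfl, ?_⟩
      rw [← hz, (hz1 z).2 hzm, ← hm, pow_orderOf_eq_one]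
    · have hz0 : z ≠ 0 := by
        rintro rfl; exact hzm (dvd_zero _)
      have hfin : FiniteMultiplicity (p : ℤ) z := by
        rw [Int.finiteMultiplicity_iff]; exact ⟨by simpa using hp.ne_one, hz0⟩
      obtain ⟨c, hc1, hpc⟩ := hfin.exists_eq_pow_mul_and_not_dvd
      obtain ⟨l, hl⟩ : ∃ l, l = multiplicity (p : ℤ) z := ⟨_, rfl⟩
      rw [← hl] at hc1
      have hmem := coprime_mem hp hG a c hpc
      have hzp : Subgroup.zpowers (a ^ c) = Subgroup.zpowers a :=
        le_antisymm (Subgroup.zpowers_le.2 (Subgroup.zpow_mem _ (Subgroup.mem_zpowers a) _)) (Subgroup.zpowers_le.2 hmem)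
      refine ⟨a ^ c, l, ?_, ?_, ?_, ?_, ?_⟩
      · rw [eq_top_iff, ← hgen]
        exact aux_closure_le ((Subgroup.zpowers_le.2 (aux_mem_l _ _)) hmem) (aux_mem_r _ _)
      · rw [← Nat.card_zpowers, hzp, Nat.card_zpowers, hm]
      · rw [← conj_zpow, hcz, ← zpow_mul, ← zpow_mul, mul_comm]
      · by_contra h0
        apply hzm
        rw [hc1]
        exact (pow_dvd_pow _ (by omega)).trans (dvd_mul_right _ _)
      · rw [← hz, hc1, ← zpow_natCast, ← zpow_mul, mul_comm]
        push_cast; rfl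
  have hz1 : ∀ z : ℤ, a ^ z = 1 ↔ (p : ℤ) ^ m ∣ z := by
    intro z
    rw [← orderOf_dvd_iff_zpow_eq_one, hm]; push_cast; rfl
  have ha : a ^ p ^ m = 1 := by rw [← hm, pow_orderOf_eq_one]
  have hc : b * a * b⁻¹ = a ^ (1 + p ^ r) := by
    rw [hcz, ← zpow_natCast]; push_cast; rfl
  by_cases hlk : l ≤ k
  · exact ⟨m, k, l, r, a, b, hp, h3, hcard, hgen, ha, hb, hc, hr, hlk, hlm, raw_hmr hp hm hb hc⟩
  obtain ⟨ε, e1, e2⟩ := nt_geom hp h3 hr (1 + (p : ℤ) ^ r) (by simp) k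
  obtain ⟨α, β, hαβ⟩ := nt_coprime hp hr e2 m
  have hb' : (a ^ (β * (1 - (p : ℤ) ^ (l - k))) * b) ^ p ^ k = a ^ p ^ k := by
    rw [raw_pow hcz, e1, hb, ← zpow_natCast, ← zpow_natCast, ← zpow_add, ← mul_inv_eq_one, ← zpow_neg, ← zpow_add, hz1]
    refine ⟨- α * (p ^ k - p ^ l), ?_⟩
    have e3 : (p : ℤ) ^ l = p ^ (l - k) * p ^ k := by rw [← pow_add]; congr 1; omega
    push_cast
    rw [e3]
    linear_combination (p : ℤ) ^ k * (1 - p ^ (l - k)) * hαβ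
  have hc' : (a ^ (β * (1 - (p : ℤ) ^ (l - k))) * b) * a * (a ^ (β * (1 - (p : ℤ) ^ (l - k))) * b)⁻¹ = a ^ (1 + p ^ r) := by
    have : ∀ x : ℤ, (a ^ x * b) * a * (a ^ x * b)⁻¹ = a ^ x * (b * a * b⁻¹) * (a ^ x)⁻¹ := fun x => by group
    rw [this, hcz, ← zpow_add, ← zpow_neg, ← zpow_add, ← zpow_natCast]
    congr 1; push_cast; ring
  refine ⟨m, k, k, r, a, _, hp, h3, hcard, ?_, ha, hb', hc', hr, le_rfl, by omega, raw_hmr hp hm hb' hc'⟩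
  rw [eq_top_iff, ← hgen]
  refine aux_closure_le (aux_mem_l _ _) ?_
  have h1 := mul_mem (inv_mem (Subgroup.zpow_mem _ (aux_mem_l a (a ^ (β * (1 - (p : ℤ) ^ (l - k))) * b)) (β * (1 - (p : ℤ) ^ (l - k)))))
    (aux_mem_r a (a ^ (β * (1 - (p : ℤ) ^ (l - k))) * b))
  rwa [inv_mul_cancel_left] at h1


theorem MCG.minr {p m k l r : ℕ} {G : Type} [Group G] {a b : G} (h : MCG p m k l r G a b) (hm : 1 ≤ m) :
    MCG p m k l (min r m) G a b := by
  rcases le_total r m with h1 | h1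
  · rwa [min_eq_left h1]
  · rw [min_eq_right h1]
    refine ⟨h.hp, h.h3, h.card, h.gen, h.ha, h.hb, ?_, hm, h.hlk, h.hlm, by omega⟩
    have e : p ^ r = p ^ m * p ^ (r - m) := by rw [← pow_add]; congr 1; omega
    rw [h.hc, pow_add, pow_add, e, pow_mul, h.ha, one_pow]

theorem MCG.step2 {p m k l r : ℕ} {G : Type} [Group G] {a b : G} (h : MCG p m k l r G a b) (hl : 1 ≤ l)
    (hlr : l ≤ r) (hrm : r ≤ m) : ∃ a' : G, MCG p (l + m - r) (k + r - l) l l G a' b := by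
  have hlk := h.hlk; have hlm := h.hlm; have hmr := h.hmr
  obtain ⟨y, hy⟩ : ∃ y, y = p ^ (k - l) * (p ^ (r - l) - 1) := ⟨_, rfl⟩
  have hp1 : 1 ≤ p ^ (r - l) := Nat.one_le_pow _ _ h.hp.pos
  have e1 : (a * b ^ y) ^ p ^ l = a ^ p ^ r := by
    have h1 := h.pow_rep 1 y (p ^ l)
    obtain ⟨ε, h2, ⟨c, hc⟩⟩ := nt_geom h.hp h.h3 h.hr _ (h.vpow y) l
    have h4 : b ^ (y * p ^ l) = a ^ ((p : ℤ) ^ r - p ^ l) := by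
      have : y * p ^ l = p ^ k * (p ^ (r - l) - 1) := by
        rw [hy, mul_right_comm, ← pow_add, Nat.sub_add_cancel hlk]
      rw [this, pow_mul, h.hb, ← pow_mul, ← zpow_natCast]
      congr 1
      push_cast [hp1]
      rw [mul_sub, ← pow_add, Nat.add_sub_cancel' hlr, mul_one]
    rw [zpow_one, one_mul, h2, h4, ← zpow_add] at h1
    rw [h1]
    have h5 : (p : ℤ) ^ l * ε + (p ^ r - p ^ l) = p ^ r + p ^ m * (p ^ (l + r - m) * c) := by
      have : (p : ℤ) ^ l * p ^ r = p ^ m * p ^ (l + r - m) := by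
        rw [← pow_add, ← pow_add]; congr 1; omega
      have e : ε = 1 + p ^ r * c := by linarith
      rw [e]
      linear_combination c * this
    have h6 : a ^ ((p : ℤ) ^ m) = 1 := by
      have := h.ha
      rw [← zpow_natCast] at this
      push_cast at this
      exact this
    rw [h5, zpow_add, zpow_mul a (p ^ m), h6, one_zpow, mul_one, ← zpow_natCast]
    push_cast; rfl
  refine ⟨a * b ^ y, h.hp, h.h3, ?_, ?_, ?_, ?_, ?_, hl, by omega, by omega, by omega⟩
  · rw [h.card]; congr 1; omega
  · rw [eq_top_iff, ← h.gen]
    refine aux_closure_le ?_ (aux_mem_r _ _)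
    have h1 := mul_mem (aux_mem_l (a * b ^ y) b) (inv_mem (Subgroup.pow_mem _ (aux_mem_r (a * b ^ y) b) y))
    rwa [mul_inv_cancel_right] at h1
  · have : l + m - r = l + (m - r) := by omega
    rw [this, pow_add, pow_mul, e1, ← pow_mul, ← pow_add, Nat.add_sub_cancel' hrm, h.ha]
  · have : k + r - l = k + (r - l) := by omega
    rw [e1, this, pow_add, pow_mul, h.hb, ← pow_mul, ← pow_add, Nat.add_sub_cancel' hlr]
  · have h1 : b * (a * b ^ y) * b⁻¹ = (b * a * b⁻¹) * b ^ y := by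
      have : b * b ^ y * b⁻¹ = b ^ y := by
        rw [← pow_succ', pow_succ, mul_inv_cancel_right]
      calc b * (a * b ^ y) * b⁻¹ = (b * a * b⁻¹) * (b * b ^ y * b⁻¹) := by group
        _ = _ := by rw [this]
    rw [h1, h.hc, add_comm 1 (p ^ r), pow_add, pow_one, mul_assoc, add_comm 1 (p ^ l), pow_add _ (p ^ l), e1, pow_one]

theorem omega_one_le {p n e : ℕ} (hp : p.Prime) {P : Type} [Group P] (hP : Nat.card P = p ^ n)
    (ht : HasTypeInvariants p P [e, 3]) : Nat.card (OmegaSubgroup p P 1) ≤ p ^ 2 := by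
  haveI : Finite P := Nat.finite_of_card_ne_zero (by rw [hP]; exact pow_ne_zero _ hp.ne_zero)
  obtain ⟨d, hdn, hd⟩ := (Nat.dvd_prime_pow hp).1 (hP ▸ Subgroup.card_subgroup_dvd_card (OmegaSubgroup p P 1))
  rw [hd]
  by_contra hlt
  have hd3 : 3 ≤ d := by
    by_contra h0
    exact hlt (Nat.pow_le_pow_right hp.pos (by omega))
  have h1 : omegaInv p P 1 = d := by
    have h0 : OmegaSubgroup p P (1 - 1) = ⊥ := by
      rw [OmegaSubgroup, eq_bot_iff, Subgroup.closure_le]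
      intro x hx
      simpa using hx
    rw [omegaInv, h0, Subgroup.relIndex_bot_left, hd, hp.factorization_pow, Finsupp.single_eq_same]
  have h2 : muInv p P 3 = 0 := by simpa using ht 2
  have hfin : Finite {i : ℕ // 1 ≤ i ∧ 3 ≤ omegaInv p P i} := by
    refine Set.Finite.to_subtype (s := {i : ℕ | 1 ≤ i ∧ 3 ≤ omegaInv p P i}) ((Set.finite_le_nat n).subset ?_)
    rintro i ⟨hi, hi3⟩
    by_contra hin
    simp only [Set.mem_ofPred_eq, not_le] at hin
    have htop : ∀ j, n ≤ j → OmegaSubgroup p P j = ⊤ := by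
      intro j hj
      rw [eq_top_iff]
      intro x _
      refine Subgroup.subset_closure ?_
      change x ^ p ^ j = 1
      rw [← Nat.add_sub_cancel' hj, pow_add, pow_mul, ← hP, pow_card_eq_one', one_pow]
    rw [omegaInv, htop (i - 1) (by omega), htop i (by omega), Subgroup.relIndex_self] at hi3
    simp at hi3
  have hne : Nonempty {i : ℕ // 1 ≤ i ∧ 3 ≤ omegaInv p P i} := ⟨⟨1, le_rfl, by omega⟩⟩
  have := Nat.card_pos (α := {i : ℕ // 1 ≤ i ∧ 3 ≤ omegaInv p P i})
  rw [muInv] at h2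
  omega

theorem classify {p e : ℕ} (hp : p.Prime) (h3 : 3 ≤ p) {P : Type} [Group P] (hP : Nat.card P = p ^ (e + 3))
    (hreg : IsRegularPGroup p P) (ht : HasTypeInvariants p P [e, 3]) :
    ∃ (r u : ℕ) (a b : P), r ≤ 3 ∧ u + 3 ≤ e ∧ MCG p (3 + u) (e - u) 3 r P a b := by
  obtain ⟨hpow, hcom, hg⟩ := reg_classC hp hP hreg (omega_one_le hp hP ht)
  obtain ⟨a, b, hgen, hba⟩ := classC_metacyclic hp _ P hP hpow hcom hg
  obtain ⟨m, k, l, r, a, b, h⟩ := classify0 hp h3 hP a b hgen hba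
  have hl : l = 3 := by
    have h1 := h.muInv_eq.2.1
    have h2 := ht 1
    rw [h1] at h2
    simpa using h2
  subst hl
  have hm := h.hlm
  have hk := h.hlk
  have key : ∀ {m k r : ℕ} {a b : P}, MCG p m k 3 r P a b → r ≤ 3 → 
      ∃ (r u : ℕ) (a b : P), r ≤ 3 ∧ u + 3 ≤ e ∧ MCG p (3 + u) (e - u) 3 r P a b := by
    intro m k r a b h hr
    have h1 := h.card
    rw [hP] at h1
    have h2 := Nat.pow_right_injective hp.two_le h1
    have h4 := h.hlm
    have h5 := h.hlk
    refine ⟨r, m - 3, a, b, hr, by omega, ?_⟩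
    have e1 : 3 + (m - 3) = m := by omega
    have e2 : e - (m - 3) = k := by omega
    rwa [e1, e2]
  by_cases hr : r ≤ 3
  · exact key h hr
  · obtain ⟨a', h'⟩ := (h.minr (by omega)).step2 (by omega) (by omega) (min_le_right _ _)
    exact key h' le_rfl


theorem MCG.transport {p m k l r : ℕ} {G G' : Type} [Group G] [Group G'] {a b : G} (h : MCG p m k l r G a b)
    (φ : G ≃* G') : MCG p m k l r G' (φ a) (φ b) := by
  refine ⟨h.hp, h.h3, ?_, ?_, ?_, ?_, ?_, h.hr, h.hlk, h.hlm, h.hmr⟩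
  · rw [← h.card]; exact (Nat.card_congr φ.toEquiv).symm
  · have h1 : (Subgroup.closure {a, b}).map φ.toMonoidHom = Subgroup.closure {φ a, φ b} := by
      rw [MonoidHom.map_closure, Set.image_pair]; rfl
    rw [← h1, h.gen, ← MonoidHom.range_eq_map]
    exact MonoidHom.range_eq_top.2 φ.surjective
  · rw [← map_pow, h.ha, map_one]
  · rw [← map_pow, h.hb, map_pow]
  · rw [← map_mul, ← map_inv, ← map_mul, h.hc, map_pow]

theorem MCG.to_type {p m k l r : ℕ} {G : Type} [Group G] {a b : G} (h : MCG p m k l r G a b)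
    (F : Type) (E : F ≃ G) : ∃ (s : Group F) (a b : F), MCG p m k l r F a b := by
  letI s : Group F := E.group
  exact ⟨s, _, _, h.transport (E.mulEquiv).symm⟩

/-- The finite set of parameters. -/
def paramSet (e : ℕ) : Finset (ℕ × ℕ) :=
  (Finset.range 4 ×ˢ Finset.range 4).filter fun x => 1 ≤ x.1 ∧ x.2 ≤ x.1 ∧ x.2 + 3 ≤ e

theorem mem_paramSet (e r u : ℕ) : (r, u) ∈ paramSet e ↔ r ≤ 3 ∧ 1 ≤ r ∧ u ≤ r ∧ u + 3 ≤ e := by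
  simp only [paramSet, Finset.mem_filter, Finset.mem_product, Finset.mem_range]
  omega

theorem paramSet_card (e : ℕ) (he : 4 ≤ e) :
    (paramSet e).card = if e = 4 then 6 else if e = 5 then 8 else 9 := by
  by_cases h4 : e = 4
  · subst h4; decide
  by_cases h5 : e = 5
  · subst h5; decide
  rw [if_neg h4, if_neg h5]
  have : paramSet e = paramSet 6 := by
    ext ⟨r, u⟩
    rw [mem_paramSet, mem_paramSet]
    omega
  rw [this]; decide

theorem psi_main {p e N : ℕ} (hp : p.Prime) (h3 : 3 ≤ p) (hN : N = p ^ (e + 3)) :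
    groupClassCount N (fun s => letI := s; IsRegularPGroup p (Fin N) ∧ HasTypeInvariants p (Fin N) [e, 3]) =
      (paramSet e).card := by
  have hex : ∀ x : paramSet e, ∃ s : Group (Fin N),
      (letI := s; IsRegularPGroup p (Fin N) ∧ HasTypeInvariants p (Fin N) [e, 3]) ∧
      ∃ a b, @MCG p (3 + x.1.2) (e - x.1.2) 3 x.1.1 (Fin N) s a b := by
    rintro ⟨⟨r, u⟩, hx⟩
    rw [mem_paramSet] at hx
    obtain ⟨G, _, a, b, h⟩ := exists_model (m := 3 + u) (k := e - u) (l := 3) (r := r) hp h3 hx.2.1 (by omega) (by omega) (by omega)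
    haveI := h.fin
    have hc : Nat.card G = N := by rw [h.card, hN]; congr 1; omega
    let E : Fin N ≃ G := (Finite.equivFinOfCardEq hc).symm
    obtain ⟨s, a', b', h'⟩ := h.to_type (Fin N) E
    refine ⟨s, ⟨h'.regular, ?_⟩, _, _, h'⟩
    have := h'.hasType
    have e1 : e - u + (3 + u) - 3 = e := by omega
    rwa [e1] at this
  choose s hQ a b hM using hex
  have hequiv : Equivalence (fun s t : {s : Group (Fin N) // (letI := s; IsRegularPGroup p (Fin N) ∧ HasTypeInvariants p (Fin N) [e, 3])} =>
      Nonempty (@MulEquiv (Fin N) (Fin N) (mulOfGroup _ s.1) (mulOfGroup _ t.1))) :=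
    ⟨fun x => ⟨@MulEquiv.refl _ (mulOfGroup _ x.1)⟩,
     fun {x y} h => h.map fun f => @MulEquiv.symm _ _ (mulOfGroup _ x.1) (mulOfGroup _ y.1) f,
     fun {x y z} h h' => h.elim fun f => h'.map fun f' => @MulEquiv.trans _ _ _ (mulOfGroup _ x.1) (mulOfGroup _ y.1) (mulOfGroup _ z.1) f f'⟩
  rw [groupClassCount, ← Fintype.card_coe, ← Nat.card_eq_fintype_card]
  symm
  refine Nat.card_congr (Equiv.ofBijective (fun x : paramSet e => Quot.mk _ ⟨s x, hQ x⟩) ⟨?_, ?_⟩)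
  · intro x y hxy
    obtain ⟨φ⟩ := (hequiv.quot_mk_eq_iff _ _).1 hxy
    have hx := (mem_paramSet e x.1.1 x.1.2).1 x.2
    have hy := (mem_paramSet e y.1.1 y.1.2).1 y.2
    have := @MCG.params p _ _ 3 _ (Fin N) (s x) _ _ _ _ _ (Fin N) (s y) _ _ (hM x) (hM y) hx.1 hy.1 φ
    apply Subtype.ext
    apply Prod.ext
    · exact this.2.2
    · omega
  · intro q
    induction q using Quot.ind with | _ t =>
    obtain ⟨t, ht⟩ := t
    have hc : Nat.card (Fin N) = p ^ (e + 3) := by rw [Nat.card_eq_fintype_card, Fintype.card_fin, hN]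
    obtain ⟨r, u, a', b', hr, hu, h⟩ := @classify p e hp h3 (Fin N) t hc ht.1 ht.2
    have hmem : (r, u) ∈ paramSet e := by
      rw [mem_paramSet]
      have h1 := h.hr
      have h2 := h.hmr
      omega
    refine ⟨⟨(r, u), hmem⟩, ?_⟩
    refine Quot.sound ?_
    exact @MCG.uniq p _ _ 3 _ (Fin N) (s ⟨(r, u), hmem⟩) _ _ (Fin N) t _ _ (hM ⟨(r, u), hmem⟩) h

/-- For every prime `p ≥ 5`, the number `Ψ_{n-3}^p(3)` of isomorphism
classes of regular `p`-groups of type `(n-3, 3)` equals `6` if `n = 7`, `8` if `n = 8`,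
and `9` if `n ≥ 9`. -/
theorem psi_type_3 (p : ℕ) (hp : p.Prime) (hp5 : 5 ≤ p) (n : ℕ) (hn : 7 ≤ n) :
    PsiType p (n - 3) [3] = (if n = 7 then 6 else if n = 8 then 8 else 9) := by
  have h1 : PsiType p (n - 3) [3] = (paramSet (n - 3)).card :=
    psi_main hp (by omega) rfl
  rw [h1, paramSet_card _ (by omega)]
  split_ifs <;> omega
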